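/- arXiv:0802.2554 — 2 statements merged into one kernel-verified Lean document; each statement's English description precedes it below -/
import Mathlib

section
/- For every finite set X and every d ≥ -1, the group P_d(X) contains no free non-abelian subgroup. -/
/-! The rooted tree `X^*` of finite words over a fixed alphabet `X`, realized via its
boundary `X^ω = ℕ → X`; automorphisms, restrictions, self-similar and contracting groups. -/

/-- A permutation of the boundary `X^ω = ℕ → X` is (induced by) an automorphism of the
rooted tree `X^*` iff for all `n` it preserves the relation "agree on the first `n`
letters" (two sequences have the same length-`n` beginning iff their images do). -/
def IsTreeAut {X : Type*} (f : Equiv.Perm (ℕ → X)) : Prop :=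
  ∀ (n : ℕ) (w w' : ℕ → X),
    (∀ i, i < n → w i = w' i) ↔ (∀ i, i < n → f w i = f w' i)

/-- The automorphism group `Aut X^*` of the rooted tree `X^*`, realized as the group of
those permutations of the boundary `X^ω` induced by tree automorphisms. -/
def treeAut (X : Type*) : Subgroup (Equiv.Perm (ℕ → X)) where
  carrier := {f | IsTreeAut f}
  one_mem' := by intro n w w'; simp
  mul_mem' := by
    intro f g hf hg n w w'
    have h := (hg n w w').trans (hf n (g w) (g w'))
    simpa using h
  inv_mem' := by
    intro f hf n w w'
    have h := (hf n (f⁻¹ w) (f⁻¹ w')).symm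
    simpa using h

/-- The concatenation `v·u ∈ X^ω` of a finite word `v ∈ X^m` and a sequence `u ∈ X^ω`. -/
def wappend {X : Type*} {m : ℕ} (v : Fin m → X) (u : ℕ → X) : ℕ → X :=
  fun i => if h : i < m then v ⟨i, h⟩ else u (i - m)

/-- The underlying function of the restriction `f|_v`: it sends `u` to the sequence with
`v·u ↦ (f v)·(f|_v u)`, i.e. `(f|_v u) j` is letter `m + j` of `f (v·u)`. -/
def restrictFun {X : Type*} (f : Equiv.Perm (ℕ → X)) {m : ℕ} (v : Fin m → X) :
    (ℕ → X) → (ℕ → X) :=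
  fun u j => f (wappend v u) (m + j)

open scoped Classical in
/-- The restriction (section, state) `f|_v` of `f` at the vertex `v ∈ X^*`: the unique
automorphism of `X^*` with `f (v·u) = (f v)·(f|_v u)` for all `u`.  (For `f` a tree
automorphism the underlying function `restrictFun f v` is bijective, and `f|_v` is the
corresponding permutation of the boundary.) -/
noncomputable def restrictPerm {X : Type*} (f : Equiv.Perm (ℕ → X)) {m : ℕ}
    (v : Fin m → X) : Equiv.Perm (ℕ → X) :=
  if h : Function.Bijective (restrictFun f v) then Equiv.ofBijective _ h else 1

/-- A group `G` of permutations of the boundary is self-similar if it is closed under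
taking restrictions. -/
def SelfSimilar {X : Type*} (G : Subgroup (Equiv.Perm (ℕ → X))) : Prop :=
  ∀ g ∈ G, ∀ (m : ℕ) (v : Fin m → X), restrictPerm g v ∈ G

/-- The (self-similar) group `G` is contracting with the finite set `N ⊆ G`: for every
`g ∈ G` there is `n` such that `g|_v ∈ N` for all words `v` of length greater than `n`. -/
def IsContractingWith {X : Type*} (G : Subgroup (Equiv.Perm (ℕ → X)))
    (N : Finset (Equiv.Perm (ℕ → X))) : Prop :=
  (N : Set (Equiv.Perm (ℕ → X))) ⊆ (G : Set (Equiv.Perm (ℕ → X))) ∧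
    ∀ g ∈ G, ∃ n : ℕ, ∀ (m : ℕ) (v : Fin m → X), n < m → restrictPerm g v ∈ N

/-- The restriction `f|_v` is trivial: `f` maps `v·u` to `(f v)·u` for every `u`. -/
def RestrictTrivial {X : Type*} (f : Equiv.Perm (ℕ → X)) {m : ℕ} (v : Fin m → X) : Prop :=
  ∀ u : ℕ → X, (∀ i : Fin m, u i = v i) → ∀ i, m ≤ i → f u i = u i

/-- The growth function `θ_f(n) = |{v ∈ X^n : f|_v ≠ id}|` of `f`. -/
noncomputable def thetaGrowth {X : Type*} (f : Equiv.Perm (ℕ → X)) (n : ℕ) : ℕ :=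
  {v : Fin n → X | ¬ RestrictTrivial f v}.ncard

/-- `f` is finite-state: it has only finitely many restrictions `f|_v`, `v ∈ X^*`. -/
def FiniteState {X : Type*} (f : Equiv.Perm (ℕ → X)) : Prop :=
  {h : Equiv.Perm (ℕ → X) | ∃ (m : ℕ) (v : Fin m → X), restrictPerm f v = h}.Finite

/-- `f` is finitary: for some `n`, `f|_v = id` for all words `v` of length `n`. -/
def IsFinitary {X : Type*} (f : Equiv.Perm (ℕ → X)) : Prop :=
  ∃ n : ℕ, ∀ u : ℕ → X, ∀ i, n ≤ i → f u i = u i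

/-- Membership in Sidki's group `P_d(X)`, for `d ≥ -1`: for `d = -1`, the finitary
automorphisms of `X^*`; for `d ≥ 0`, the finite-state automorphisms of `X^*` whose growth
function `θ` is bounded above by a polynomial of degree `d`. -/
def MemP {X : Type*} (d : ℤ) (f : Equiv.Perm (ℕ → X)) : Prop :=
  IsTreeAut f ∧
    ((d = -1 ∧ IsFinitary f) ∨
      (0 ≤ d ∧ FiniteState f ∧
        ∃ p : Polynomial ℕ, (p.natDegree : ℤ) ≤ d ∧ ∀ n, thetaGrowth f n ≤ p.eval n))

/-- The set `Σ_f` of `f`-singular points of `X^ω`: points none of whose beginnings `v`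
satisfy `f|_v = id`. -/
def singularSet {X : Type*} (f : Equiv.Perm (ℕ → X)) : Set (ℕ → X) :=
  {w | ∀ m : ℕ, ¬ RestrictTrivial f (fun i : Fin m => w i)}

section FreeGroupWords

open FreeGroup

/-- The elements of a free group whose reduced word starts with the letter `s`. -/
def headSet (s : Fin 2 × Bool) : Set (FreeGroup (Fin 2)) :=
  {g | g.toWord.head? = some s}

/-- The elements of a free group whose reduced word starts with a power of the generator `c`. -/
def headIn (c : Fin 2) : Set (FreeGroup (Fin 2)) :=
  {g | ∃ ε, g ∈ headSet (c, ε)}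

theorem headSet_disjoint {s t : Fin 2 × Bool} (h : s ≠ t) :
    Disjoint (headSet s) (headSet t) := by
  rw [Set.disjoint_left]
  intro g hs ht
  simp only [headSet, Set.mem_ofPred_eq] at hs ht
  rw [hs] at ht
  exact h (Option.some.inj ht)

theorem one_notMem_headSet (s : Fin 2 × Bool) : (1 : FreeGroup (Fin 2)) ∉ headSet s := by
  simp [headSet]

theorem one_notMem_headIn (c : Fin 2) : (1 : FreeGroup (Fin 2)) ∉ headIn c := by
  simp [headIn, one_notMem_headSet]

theorem notMem_headIn_of_ne {c d : Fin 2} (h : c ≠ d) {g : FreeGroup (Fin 2)}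
    (hg : g ∈ headIn c) : g ∉ headIn d := by
  rintro ⟨ε, hd⟩
  obtain ⟨δ, hc⟩ := hg
  exact Set.disjoint_left.1 (headSet_disjoint (by simp [h])) hc hd

theorem toWord_mul_of_isReduced {x y : FreeGroup (Fin 2)}
    (h : IsReduced (x.toWord ++ y.toWord)) : (x * y).toWord = x.toWord ++ y.toWord := by
  rw [toWord_mul, h.reduce_eq]

theorem toWord_letter_mul {i : Fin 2} {ε : Bool} {g : FreeGroup (Fin 2)}
    (hg : g ∉ headSet (i, !ε)) : (mk [(i, ε)] * g).toWord = (i, ε) :: g.toWord := by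
  have h1 : (mk [(i, ε)] : FreeGroup (Fin 2)).toWord = [(i, ε)] := by
    rw [toWord_mk, reduce_singleton]
  rw [toWord_mul_of_isReduced, h1, List.singleton_append]
  rw [h1, List.singleton_append]
  have hr : IsReduced g.toWord := isReduced_toWord
  have hg' : g.toWord.head? ≠ some (i, !ε) := hg
  cases hw : g.toWord with
  | nil => exact IsReduced.singleton
  | cons s L =>
    rw [hw] at hr hg'
    refine isReduced_cons_cons.2 ⟨?_, hr⟩
    intro hs
    by_contra hne
    apply hg'
    obtain ⟨j, δ⟩ := s
    simp only at hs hne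
    subst hs
    cases ε <;> cases δ <;> simp_all

theorem of_mul_mem_headSet {i : Fin 2} {g : FreeGroup (Fin 2)}
    (hg : g ∉ headSet (i, false)) : of i * g ∈ headSet (i, true) := by
  have := toWord_letter_mul (ε := true) hg
  change (mk [(i, true)] * g).toWord.head? = _
  rw [this]; rfl

theorem of_inv_mul_mem_headSet {i : Fin 2} {g : FreeGroup (Fin 2)}
    (hg : g ∉ headSet (i, true)) : (of i)⁻¹ * g ∈ headSet (i, false) := by
  have := toWord_letter_mul (ε := false) hg
  change (mk [(i, false)] * g).toWord.head? = _
  rw [this]; rfl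

/-- Along an edge of the Cayley graph, one of the ends is obtained from the other by adding a
letter in front of the reduced word. -/
theorem toWord_of_mul (i : Fin 2) (z : FreeGroup (Fin 2)) :
    (of i * z).toWord.head? = some (i, true) ∨ z.toWord.head? = some (i, false) := by
  by_cases h : z ∈ headSet (i, false)
  · exact Or.inr h
  · exact Or.inl (of_mul_mem_headSet h)

theorem of_pow_mul_mem_headSet {i : Fin 2} {g : FreeGroup (Fin 2)}
    (hg : g ∉ headSet (i, false)) (n : ℕ) : of i ^ (n + 1) * g ∈ headSet (i, true) := by
  induction n with
  | zero => simpa using of_mul_mem_headSet hg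
  | succ n ih =>
    rw [pow_succ', mul_assoc]
    exact of_mul_mem_headSet (Set.disjoint_left.1 (headSet_disjoint (by simp)) ih)

theorem of_inv_pow_mul_mem_headSet {i : Fin 2} {g : FreeGroup (Fin 2)}
    (hg : g ∉ headSet (i, true)) (n : ℕ) :
    (of i)⁻¹ ^ (n + 1) * g ∈ headSet (i, false) := by
  induction n with
  | zero => simpa using of_inv_mul_mem_headSet hg
  | succ n ih =>
    rw [pow_succ', mul_assoc]
    exact of_inv_mul_mem_headSet (Set.disjoint_left.1 (headSet_disjoint (by simp)) ih)

theorem of_zpow_mul_mem_headIn {i : Fin 2} {g : FreeGroup (Fin 2)}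
    (hg : g ∉ headIn i) {n : ℤ} (hn : n ≠ 0) : of i ^ n * g ∈ headIn i := by
  have hg' : ∀ ε, g ∉ headSet (i, ε) := fun ε h => hg ⟨ε, h⟩
  rcases lt_or_gt_of_ne hn with h | h
  · obtain ⟨m, rfl⟩ : ∃ m : ℕ, n = -((m + 1 : ℕ) : ℤ) := ⟨(-n - 1).toNat, by lia⟩
    refine ⟨false, ?_⟩
    rw [zpow_neg, zpow_natCast, ← inv_pow]
    exact of_inv_pow_mul_mem_headSet (hg' _) m
  · obtain ⟨m, rfl⟩ : ∃ m : ℕ, n = ((m + 1 : ℕ) : ℤ) := ⟨(n - 1).toNat, by lia⟩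
    refine ⟨true, ?_⟩
    rw [zpow_natCast]
    exact of_pow_mul_mem_headSet (hg' _) m

/-- Ping-pong with one attracting set for every generator and for every inverse of a generator. -/
theorem exists_lift_smul_mem_of_pingPong {G α : Type*} [Group G] [MulAction G α]
    (x : Fin 2 → G) (U : Fin 2 × Bool → Set α) (hdisj : ∀ s t, s ≠ t → Disjoint (U s) (U t))
    (hpos : ∀ i, ∀ y ∉ U (i, false), x i • y ∈ U (i, true))
    (hneg : ∀ i, ∀ y ∉ U (i, true), (x i)⁻¹ • y ∈ U (i, false))
    {y : α} (hy : ∀ s, y ∉ U s) {z : FreeGroup (Fin 2)} (hz : z ≠ 1) :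
    ∃ s, lift x z • y ∈ U s := by
  have key : ∀ (L : List (Fin 2 × Bool)) (s : Fin 2 × Bool), IsReduced (s :: L) →
      lift x (mk (s :: L)) • y ∈ U s := by
    intro L
    induction L with
    | nil =>
      rintro ⟨i, ε⟩ -
      cases ε
      · simpa [lift_mk] using hneg i y (hy _)
      · simpa [lift_mk] using hpos i y (hy _)
    | cons t L ih =>
      rintro ⟨i, ε⟩ hr
      obtain ⟨hst, hr'⟩ := isReduced_cons_cons.1 hr
      have hmem := ih t hr'
      have hne : t ≠ (i, !ε) := by
        rintro rfl
        simpa using hst rfl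
      have hnot := Set.disjoint_left.1 (hdisj _ _ hne) hmem
      have hmul : (mk ((i, ε) :: t :: L) : FreeGroup (Fin 2)) = mk [(i, ε)] * mk (t :: L) := by
        rw [mul_mk]; rfl
      rw [hmul, _root_.map_mul, mul_smul]
      cases ε
      · simpa [lift_mk] using hneg i _ hnot
      · simpa [lift_mk] using hpos i _ hnot
  cases hw : z.toWord with
  | nil => exact absurd (toWord_eq_nil_iff.1 hw) hz
  | cons s L =>
    refine ⟨s, ?_⟩
    rw [← mk_toWord (x := z), hw]
    apply key
    rw [← hw]
    exact isReduced_toWord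

theorem lift_pow_injective {k : ℕ} (hk : 0 < k) :
    Function.Injective (lift fun i : Fin 2 => (of i : FreeGroup (Fin 2)) ^ k) := by
  rw [injective_iff_map_eq_one]
  intro z hz
  by_contra hne
  obtain ⟨n, rfl⟩ : ∃ n, k = n + 1 := ⟨k - 1, by lia⟩
  obtain ⟨s, hs⟩ := exists_lift_smul_mem_of_pingPong
    (fun i : Fin 2 => (of i : FreeGroup (Fin 2)) ^ (n + 1)) headSet
    (fun s t h => headSet_disjoint h)
    (fun i y hy => of_pow_mul_mem_headSet hy n)
    (fun i y hy => by rw [← inv_pow]; exact of_inv_pow_mul_mem_headSet hy n)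
    (y := 1) one_notMem_headSet hne
  rw [hz, one_smul] at hs
  exact one_notMem_headSet s hs

/-- The endomorphism of the free group sending the generators to `c d c⁻¹` and `c² d c⁻²`. -/
def conjEmbedding (c d : Fin 2) : FreeGroup (Fin 2) →* FreeGroup (Fin 2) :=
  lift fun i => of c ^ (i.val + 1) * of d * (of c ^ (i.val + 1))⁻¹

theorem conjEmbedding_mul_mem {c d : Fin 2} (hcd : c ≠ d) {z : FreeGroup (Fin 2)} (hz : z ≠ 1)
    {y : FreeGroup (Fin 2)} (hy : y ∉ headIn c) : conjEmbedding c d z * y ∈ headIn c := by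
  set U : Fin 2 × Bool → Set (FreeGroup (Fin 2)) :=
    fun s => {g | (of c ^ (s.1.val + 1))⁻¹ * g ∈ headSet (d, s.2)} with hU
  have hd : ∀ (ε : Bool) (n : ℕ) (g : FreeGroup (Fin 2)), g ∈ headSet (d, ε) →
      of c ^ (n + 1) * g ∈ headSet (c, true) := fun ε n g hg =>
    of_pow_mul_mem_headSet (Set.disjoint_left.1 (headSet_disjoint (by simp [hcd.symm])) hg) n
  have hUc : ∀ s, ∀ g ∈ U s, g ∈ headSet (c, true) := by
    intro s g hg
    simpa using hd _ s.1.val _ hg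
  have hlt : ∀ s t : Fin 2 × Bool, s.1.val < t.1.val → Disjoint (U s) (U t) := by
    intro s t hst
    rw [Set.disjoint_left]
    intro g hs ht
    have hs0 : s.1.val = 0 := by lia
    have ht1 : t.1.val = 1 := by lia
    simp only [hU, Set.mem_ofPred_eq, hs0, ht1] at hs ht
    have := hd _ 0 _ ht
    have h2 : of c ^ (0 + 1) * ((of c ^ (1 + 1))⁻¹ * g) = (of c ^ (0 + 1))⁻¹ * g := by group
    rw [h2] at this
    exact Set.disjoint_left.1 (headSet_disjoint (by simp [hcd])) this hs
  have hdisj : ∀ s t, s ≠ t → Disjoint (U s) (U t) := by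
    intro s t hst
    rcases lt_trichotomy s.1.val t.1.val with h | h | h
    · exact hlt s t h
    · have h' : s.1 = t.1 := Fin.ext h
      have hne : s.2 ≠ t.2 := fun h2 => hst (Prod.ext h' h2)
      rw [Set.disjoint_left]
      intro g hs ht
      simp only [hU, Set.mem_ofPred_eq, h'] at hs ht
      exact Set.disjoint_left.1 (headSet_disjoint (by simp [hne])) hs ht
    · exact (hlt t s h).symm
  obtain ⟨s, hs⟩ := exists_lift_smul_mem_of_pingPong
    (fun i : Fin 2 => of c ^ (i.val + 1) * of d * (of c ^ (i.val + 1))⁻¹) U hdisj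
    (fun i y hy => by
      have := of_mul_mem_headSet (i := d) (g := (of c ^ (i.val + 1))⁻¹ * y) hy
      simp only [hU, Set.mem_ofPred_eq, smul_eq_mul]
      simpa [mul_assoc] using this)
    (fun i y hy => by
      have := of_inv_mul_mem_headSet (i := d) (g := (of c ^ (i.val + 1))⁻¹ * y) hy
      simp only [hU, Set.mem_ofPred_eq, smul_eq_mul]
      simpa [mul_assoc] using this)
    (y := y) (fun s h => hy ⟨true, hUc s _ h⟩) hz
  exact ⟨true, hUc s _ hs⟩

/-- Nontrivial elements of the images of `conjEmbedding 0 1` and `conjEmbedding 1 0` freely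
generate a free group. -/
theorem lift_conjEmbedding_injective {p q : FreeGroup (Fin 2)} (hp : p ≠ 1) (hq : q ≠ 1) :
    Function.Injective (lift ![conjEmbedding 0 1 p, conjEmbedding 1 0 q]) := by
  set a : Fin 2 → FreeGroup (Fin 2) := ![conjEmbedding 0 1 p, conjEmbedding 1 0 q] with ha
  have hfac : lift a = (Monoid.CoprodI.lift fun i => lift fun _ : Unit => a i).comp
      (@freeGroupEquivCoprodI (Fin 2)).toMonoidHom := by
    ext i
    simp
  rw [hfac, MonoidHom.coe_comp]
  refine Function.Injective.comp ?_ (MulEquiv.injective freeGroupEquivCoprodI)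
  have hinf : Infinite (FreeGroup Unit) :=
    FreeGroup.freeGroupUnitEquivInt.infinite_iff.2 inferInstance
  refine Monoid.CoprodI.lift_injective_of_ping_pong (fun i => lift fun _ : Unit => a i)
    (Or.inr ⟨0, ?_⟩) headIn ?_ ?_ ?_
  · exact (Cardinal.natCast_lt_aleph0 (n := 3)).le.trans (Cardinal.aleph0_le_mk _)
  · intro i
    exact ⟨of i, true, by simp [headSet]⟩
  · intro i j hij
    exact Set.disjoint_left.2 fun g => notMem_headIn_of_ne hij
  · intro i j hij h hne
    have hn : FreeGroup.freeGroupUnitEquivInt h ≠ 0 := by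
      intro h0
      apply hne
      apply FreeGroup.freeGroupUnitEquivInt.injective
      rw [h0]; simp [freeGroupUnitEquivInt]
    obtain ⟨n, hn0, rfl⟩ : ∃ n : ℤ, n ≠ 0 ∧ of () ^ n = h := by
      refine ⟨_, hn, ?_⟩
      exact FreeGroup.freeGroupUnitEquivInt.symm_apply_apply h
    rw [_root_.map_zpow, lift_apply_of]
    rintro _ ⟨g, hg, rfl⟩
    have hg' : g ∉ headIn i := notMem_headIn_of_ne hij.symm hg
    simp only [smul_eq_mul]
    fin_cases i
    · have : p ^ n ≠ 1 := by simpa [hn0] using hp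
      simpa [ha, _root_.map_zpow] using conjEmbedding_mul_mem (c := 0) (d := 1) (by simp) this hg'
    · have : q ^ n ≠ 1 := by simpa [hn0] using hq
      simpa [ha, _root_.map_zpow] using conjEmbedding_mul_mem (c := 1) (d := 0) (by simp) this hg'

/-- Every element of the free group is `c ^ j * h * c ^ i`, where `h` is trivial or the reduced
word of `h` starts and ends with powers of the other generator `d`. -/
theorem exists_eq_zpow_mul_mul_zpow {c d : Fin 2} (hcd : c ≠ d) (f : FreeGroup (Fin 2)) :
    ∃ (i j : ℤ) (h : FreeGroup (Fin 2)), f = of c ^ j * h * of c ^ i ∧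
      (h = 1 ∨ ∀ y ∉ headIn d, h * y ∈ headIn d) := by
  induction hn : f.norm using Nat.strong_induction_on generalizing f with
  | _ n ih =>
  subst hn
  have hother : ∀ e : Fin 2, e ≠ c → e = d := fun e he => by lia
  have hletter : ∀ ε : Bool, ∃ m : ℤ, (mk [(c, ε)] : FreeGroup (Fin 2)) = of c ^ m := by
    rintro (_ | _)
    · exact ⟨-1, by simp [of, inv_mk, invRev]⟩
    · exact ⟨1, by simp [of]⟩
  rcases eq_or_ne f 1 with rfl | hf
  · exact ⟨0, 0, 1, by simp, Or.inl rfl⟩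
  have hne : f.toWord ≠ [] := fun h => hf (toWord_eq_nil_iff.1 h)
  have hred : IsReduced f.toWord := isReduced_toWord
  by_cases hhead : (f.toWord.head hne).1 = c
  · obtain ⟨m, hm⟩ := hletter (f.toWord.head hne).2
    have hfe : f = of c ^ m * mk f.toWord.tail := by
      rw [← hm, mul_mk, ← hhead]
      conv_lhs => rw [← mk_toWord (x := f), ← List.cons_head_tail hne]
      rfl
    have hlt : (mk f.toWord.tail).norm < f.norm := by
      refine norm_mk_le.trans_lt ?_
      have := List.length_pos_of_ne_nil hne
      rw [List.length_tail, FreeGroup.norm]; lia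
    obtain ⟨i, j, h, he, hh⟩ := ih _ hlt _ rfl
    refine ⟨i, m + j, h, ?_, hh⟩
    conv_lhs => rw [hfe, he]
    simp only [zpow_add, mul_assoc]
  by_cases hlast : (f.toWord.getLast hne).1 = c
  · obtain ⟨m, hm⟩ := hletter (f.toWord.getLast hne).2
    have hfe : f = mk f.toWord.dropLast * of c ^ m := by
      rw [← hm, mul_mk, ← hlast]
      conv_lhs => rw [← mk_toWord (x := f), ← List.dropLast_append_getLast hne]
    have hlt : (mk f.toWord.dropLast).norm < f.norm := by
      refine norm_mk_le.trans_lt ?_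
      have := List.length_pos_of_ne_nil hne
      rw [List.length_dropLast, FreeGroup.norm]; lia
    obtain ⟨i, j, h, he, hh⟩ := ih _ hlt _ rfl
    refine ⟨i + m, j, h, ?_, hh⟩
    conv_lhs => rw [hfe, he]
    simp only [zpow_add, mul_assoc]
  · refine ⟨0, 0, f, by simp, Or.inr fun y hy => ?_⟩
    have hw : (f * y).toWord = f.toWord ++ y.toWord := by
      apply toWord_mul_of_isReduced
      refine List.isChain_append.2 ⟨hred, isReduced_toWord, ?_⟩
      intro s hs t ht hst
      exfalso
      apply hy
      rw [List.getLast?_eq_some_getLast hne] at hs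
      simp only [Option.mem_def, Option.some.injEq] at hs ht
      subst hs
      refine ⟨t.2, ?_⟩
      change y.toWord.head? = some (d, t.2)
      rw [ht, ← hother _ hlast, hst]
    refine ⟨(f.toWord.head hne).2, ?_⟩
    change (f * y).toWord.head? = _
    rw [hw, List.head?_append, List.head?_eq_some_head hne, ← hother _ hhead]
    rfl

theorem exists_conj_mul_mem {c d : Fin 2} (hcd : c ≠ d) {f : FreeGroup (Fin 2)} (hf : f ≠ 1)
    {k : ℕ} (hk : 0 < k) :
    ∃ t : FreeGroup (Fin 2), ∀ y ∉ headIn c, t ^ k * f * (t ^ k)⁻¹ * y ∈ headIn c := by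
  obtain ⟨i, j, h, he, hh⟩ := exists_eq_zpow_mul_mul_zpow hcd f
  set n : ℕ := i.natAbs + j.natAbs + 1 with hn
  refine ⟨of c ^ n, fun y hy => ?_⟩
  have hbig : (i.natAbs + j.natAbs + 1 : ℤ) ≤ ((n * k : ℕ) : ℤ) := by
    have : n * 1 ≤ n * k := Nat.mul_le_mul_left _ hk
    lia
  rw [← pow_mul, ← zpow_natCast (of c)]
  generalize ((n * k : ℕ) : ℤ) = N at hbig
  have hconj : of c ^ N * f * (of c ^ N)⁻¹ * y = of c ^ (N + j) * (h * (of c ^ (i - N) * y)) := by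
    rw [he, zpow_add, zpow_sub]; simp only [mul_assoc]
  rw [hconj]
  rcases hh with rfl | hh
  · rw [one_mul, ← mul_assoc, ← zpow_add]
    apply of_zpow_mul_mem_headIn hy
    intro h0
    apply hf
    rw [he, mul_one, ← zpow_add, show j + i = N + j + (i - N) by ring, h0, zpow_zero]
  · apply of_zpow_mul_mem_headIn _ (by lia)
    refine notMem_headIn_of_ne hcd.symm (hh _ (notMem_headIn_of_ne hcd ?_))
    exact of_zpow_mul_mem_headIn hy (by lia)

/-- Finitely many nontrivial subgroups of the free group, normalized by a subgroup `N` that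
contains all `k`-th powers, have nontrivial intersection. -/
theorem exists_ne_one_mem_of_normalized {ι : Type*} (N : Subgroup (FreeGroup (Fin 2))) {k : ℕ}
    (hk : 0 < k) (hN : ∀ t, t ^ k ∈ N) (K : ι → Subgroup (FreeGroup (Fin 2)))
    (hnorm : ∀ i, ∀ n ∈ N, ∀ x ∈ K i, n * x * n⁻¹ ∈ K i) (s : Finset ι)
    (hK : ∀ i ∈ s, ∃ x ∈ K i, x ∈ N ∧ x ≠ 1) :
    ∃ x ∈ N, x ≠ 1 ∧ ∀ i ∈ s, x ∈ K i := by
  classical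
  induction s using Finset.induction_on with
  | empty =>
    exact ⟨of 0 ^ k, hN _, by simp [hk.ne'], by simp⟩
  | insert i s his ih =>
    obtain ⟨f, hfN, hf1, hfK⟩ := ih fun j hj => hK j (Finset.mem_insert_of_mem hj)
    obtain ⟨g, hgK, hgN, hg1⟩ := hK i (Finset.mem_insert_self _ _)
    obtain ⟨t, ht⟩ := exists_conj_mul_mem (c := 0) (d := 1) (by simp) hf1 hk
    obtain ⟨r, hr⟩ := exists_conj_mul_mem (c := 1) (d := 0) (by simp) hg1 hk
    set p := t ^ k * f * (t ^ k)⁻¹ with hp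
    set q := r ^ k * g * (r ^ k)⁻¹ with hq
    have hpN : p ∈ N := N.mul_mem (N.mul_mem (hN _) hfN) (N.inv_mem (hN _))
    have hqN : q ∈ N := N.mul_mem (N.mul_mem (hN _) hgN) (N.inv_mem (hN _))
    have hpK : ∀ j ∈ s, p ∈ K j := fun j hj => hnorm j _ (hN t) _ (hfK j hj)
    have hqK : q ∈ K i := hnorm i _ (hN r) _ hgK
    refine ⟨p * q * p⁻¹ * q⁻¹, ?_, ?_, ?_⟩
    · exact N.mul_mem (N.mul_mem (N.mul_mem hpN hqN) (N.inv_mem hpN)) (N.inv_mem hqN)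
    · intro h
      have hcomm : p * q = q * p := by
        rw [mul_inv_eq_one, mul_inv_eq_iff_eq_mul] at h
        exact h
      have h1 : p * q ∈ headIn 0 := by
        apply ht
        rw [← mul_one q]
        exact notMem_headIn_of_ne (by simp) (hr 1 (one_notMem_headIn 1))
      have h2 : q * p ∈ headIn 1 := by
        apply hr
        rw [← mul_one p]
        exact notMem_headIn_of_ne (by simp) (ht 1 (one_notMem_headIn 0))
      rw [hcomm] at h1
      exact notMem_headIn_of_ne (by simp) h1 h2
    · intro j hj
      rcases Finset.mem_insert.1 hj with rfl | hj
      · exact (K j).mul_mem (hnorm j _ hpN _ hqK) ((K j).inv_mem hqK)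
      · have := hnorm j _ hqN _ ((K j).inv_mem (hpK j hj))
        simpa [mul_assoc] using (K j).mul_mem (hpK j hj) this

end FreeGroupWords

namespace TreeAut

variable {X : Type*}

/-- The concatenation of a finite word and a sequence. -/
def cat : List X → (ℕ → X) → ℕ → X
  | [], u => u
  | x :: v, u => fun i => Nat.casesOn i x (cat v u)

/-- The beginning of length `n` of a sequence. -/
def pre (n : ℕ) (w : ℕ → X) : List X := (List.range n).map w

/-- The sequence obtained by deleting the first `n` letters. -/
def tl (n : ℕ) (w : ℕ → X) : ℕ → X := fun i => w (n + i)

@[simp] theorem length_pre (n : ℕ) (w : ℕ → X) : (pre n w).length = n := by simp [pre]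

@[simp] theorem pre_zero (w : ℕ → X) : pre 0 w = [] := rfl

theorem pre_eq_pre_iff {n : ℕ} {w w' : ℕ → X} :
    pre n w = pre n w' ↔ ∀ i, i < n → w i = w' i := by
  simp [pre]

theorem pre_add (n m : ℕ) (w : ℕ → X) : pre (n + m) w = pre n w ++ pre m (tl n w) := by
  simp [pre, List.range_add, tl, Function.comp_def]

theorem pre_succ (n : ℕ) (w : ℕ → X) : pre (n + 1) w = w 0 :: pre n (tl 1 w) := by
  rw [add_comm, pre_add]; simp [pre]

@[simp] theorem cat_nil (u : ℕ → X) : cat [] u = u := rfl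

theorem cat_append (v v' : List X) (u : ℕ → X) : cat (v ++ v') u = cat v (cat v' u) := by
  induction v with
  | nil => rfl
  | cons x v ih => simp [cat, ih]

@[simp] theorem cat_length_add (v : List X) (u : ℕ → X) (i : ℕ) :
    cat v u (v.length + i) = u i := by
  induction v generalizing i with
  | nil => simp
  | cons x v ih =>
    rw [List.length_cons, show v.length + 1 + i = v.length + i + 1 by ring]
    exact ih i

@[simp] theorem tl_cat (v : List X) (u : ℕ → X) : tl v.length (cat v u) = u := by
  funext i; simp [tl]

@[simp] theorem pre_cat (v : List X) (u : ℕ → X) : pre v.length (cat v u) = v := by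
  induction v with
  | nil => rfl
  | cons x v ih =>
    rw [List.length_cons, pre_succ, show tl 1 (cat (x :: v) u) = cat v u by
      funext i; simp [tl, cat, add_comm 1 i], ih]
    rfl

theorem cat_pre_tl (n : ℕ) (w : ℕ → X) : cat (pre n w) (tl n w) = w := by
  induction n generalizing w with
  | zero => funext i; simp [tl]
  | succ n ih =>
    rw [pre_succ]
    funext i
    cases i with
    | zero => rfl
    | succ i =>
      have := congrFun (ih (tl 1 w)) i
      have h2 : tl n (tl 1 w) = tl (n + 1) w := by funext j; simp [tl]; congr 1; ring
      rw [h2] at this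
      change cat (pre n (tl 1 w)) (tl (n + 1) w) i = _
      rw [this, tl, add_comm]

theorem pre_cat_of_length_eq {v : List X} {n : ℕ} (h : v.length = n) (u : ℕ → X) :
    pre n (cat v u) = v := by
  subst h; simp

theorem pre_length_add_cat (v : List X) (u : ℕ → X) (n : ℕ) :
    pre (v.length + n) (cat v u) = v ++ pre n u := by
  rw [pre_add]; simp

theorem eq_of_forall_pre_eq {w w' : ℕ → X} (h : ∀ n, pre n w = pre n w') : w = w' := by
  funext i
  exact pre_eq_pre_iff.1 (h (i + 1)) i (Nat.lt_succ_self i)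

/-- The finite set of words of length `n` over a finite alphabet. -/
noncomputable def words (X : Type*) [Finite X] (n : ℕ) : Finset (List X) :=
  (List.finite_length_eq X n).toFinset

@[simp] theorem mem_words [Finite X] {n : ℕ} {v : List X} : v ∈ words X n ↔ v.length = n := by
  simp [words]

theorem sum_words_add [Finite X] {M : Type*} [AddCommMonoid M] (n m : ℕ) (f : List X → M) :
    ∑ v ∈ words X (n + m), f v = ∑ v ∈ words X n, ∑ u ∈ words X m, f (v ++ u) := by
  rw [← Finset.sum_product']
  symm
  refine Finset.sum_bij (fun p _ => p.1 ++ p.2) ?_ ?_ ?_ ?_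
  · rintro ⟨v, u⟩ h
    simp only [Finset.mem_product, mem_words] at h
    simp [h.1, h.2]
  · rintro ⟨v, u⟩ h ⟨v', u'⟩ h' he
    simp only [Finset.mem_product, mem_words] at h h'
    have := List.append_inj he (h.1.trans h'.1.symm)
    exact Prod.ext this.1 this.2
  · intro v hv
    rw [mem_words] at hv
    refine ⟨(v.take n, v.drop n), ?_, List.take_append_drop n v⟩
    simp [hv]
  · intro _ _; rfl

/-! ### The action on finite words and sections -/

theorem pre_apply_eq_pre_apply_iff (g : treeAut X) {n : ℕ} {w w' : ℕ → X} :
    pre n (g.1 w) = pre n (g.1 w') ↔ pre n w = pre n w' := by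
  rw [pre_eq_pre_iff, pre_eq_pre_iff]
  exact (g.2 n w w').symm

theorem ext_apply {g h : treeAut X} (hgh : ∀ u, g.1 u = h.1 u) : g = h :=
  Subtype.ext (Equiv.ext hgh)

variable [Nonempty X]

/-- The action of a tree automorphism on finite words. -/
noncomputable def act (g : treeAut X) (v : List X) : List X :=
  pre v.length (g.1 (cat v fun _ => Classical.arbitrary X))

theorem act_pre (g : treeAut X) (n : ℕ) (w : ℕ → X) : act g (pre n w) = pre n (g.1 w) := by
  rw [act, length_pre, pre_apply_eq_pre_apply_iff, pre_cat_of_length_eq (length_pre n w)]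

@[simp] theorem length_act (g : treeAut X) (v : List X) : (act g v).length = v.length := by
  simp [act]

theorem exists_pre_eq (v : List X) : ∃ w, pre v.length w = v :=
  ⟨cat v fun _ => Classical.arbitrary X, pre_cat _ _⟩

@[simp] theorem act_one (v : List X) : act 1 v = v := by
  simp [act]

theorem act_mul (g h : treeAut X) (v : List X) : act (g * h) v = act g (act h v) := by
  obtain ⟨w, hw⟩ := exists_pre_eq v
  rw [← hw, act_pre, act_pre, act_pre]
  rfl

@[simp] theorem act_inv_act (g : treeAut X) (v : List X) : act g⁻¹ (act g v) = v := by
  rw [← act_mul, inv_mul_cancel, act_one]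

@[simp] theorem act_act_inv (g : treeAut X) (v : List X) : act g (act g⁻¹ v) = v := by
  rw [← act_mul, mul_inv_cancel, act_one]

theorem act_injective (g : treeAut X) : Function.Injective (act g) :=
  Function.LeftInverse.injective (act_inv_act g)

theorem apply_cat_eq (g : treeAut X) (v : List X) (u : ℕ → X) :
    g.1 (cat v u) = cat (act g v) (tl v.length (g.1 (cat v u))) := by
  conv_lhs => rw [← cat_pre_tl v.length (g.1 (cat v u)), ← act_pre, pre_cat]

/-- The section of a tree automorphism at a finite word. -/
noncomputable def sec (g : treeAut X) (v : List X) : treeAut X where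
  val :=
    { toFun := fun u => tl v.length (g.1 (cat v u))
      invFun := fun u => tl v.length (g⁻¹.1 (cat (act g v) u))
      left_inv := fun u => by
        beta_reduce
        rw [← apply_cat_eq]
        simp
      right_inv := fun u => by
        have h := apply_cat_eq g⁻¹ (act g v) u
        rw [act_inv_act, length_act] at h
        simp only
        rw [← h]
        have h2 := tl_cat (act g v) u
        rw [length_act] at h2
        simpa using h2 }
  property := by
    intro n w w'
    have h := pre_apply_eq_pre_apply_iff g (n := v.length + n) (w := cat v w) (w' := cat v w')
    rw [pre_length_add_cat, pre_length_add_cat, List.append_cancel_left_eq, pre_add, pre_add,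
      ← act_pre, ← act_pre, pre_cat, pre_cat, List.append_cancel_left_eq, pre_eq_pre_iff,
      pre_eq_pre_iff] at h
    exact h.symm

theorem apply_cat (g : treeAut X) (v : List X) (u : ℕ → X) :
    g.1 (cat v u) = cat (act g v) ((sec g v).1 u) :=
  apply_cat_eq g v u

theorem sec_apply (g : treeAut X) (v : List X) (u : ℕ → X) :
    (sec g v).1 u = tl v.length (g.1 (cat v u)) := rfl

theorem sec_eq_of_apply_cat {g h : treeAut X} {v v' : List X} (hv : v'.length = v.length)
    (H : ∀ u, g.1 (cat v u) = cat v' (h.1 u)) : sec g v = h := by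
  refine ext_apply fun u => ?_
  rw [sec_apply, H, ← hv, tl_cat]

@[simp] theorem sec_nil (g : treeAut X) : sec g [] = g :=
  sec_eq_of_apply_cat rfl fun _ => rfl

@[simp] theorem sec_one (v : List X) : sec (1 : treeAut X) v = 1 :=
  sec_eq_of_apply_cat rfl fun _ => rfl

theorem sec_mul (g h : treeAut X) (v : List X) :
    sec (g * h) v = sec g (act h v) * sec h v := by
  refine sec_eq_of_apply_cat (v' := act g (act h v)) (by simp) fun u => ?_
  change g.1 (h.1 _) = cat _ ((sec g (act h v)).1 ((sec h v).1 u))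
  rw [apply_cat h, apply_cat]

theorem sec_inv (g : treeAut X) (v : List X) : sec g⁻¹ v = (sec g (act g⁻¹ v))⁻¹ := by
  rw [eq_inv_iff_mul_eq_one]
  have := sec_mul g⁻¹ g (act g⁻¹ v)
  rw [inv_mul_cancel, sec_one, act_act_inv] at this
  exact this.symm

theorem sec_append (g : treeAut X) (v u : List X) : sec g (v ++ u) = sec (sec g v) u := by
  refine sec_eq_of_apply_cat (v' := act g v ++ act (sec g v) u) (by simp) fun y => ?_
  rw [cat_append, cat_append, apply_cat, apply_cat]

theorem act_append (g : treeAut X) (v u : List X) :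
    act g (v ++ u) = act g v ++ act (sec g v) u := by
  obtain ⟨w, hw⟩ := exists_pre_eq u
  have h := pre_length_add_cat v w u.length
  rw [hw] at h
  rw [← h, act_pre, apply_cat, ← length_act g v, pre_length_add_cat, ← act_pre, hw]

/-- Sections at a word fixed by the second factor are multiplicative. -/
theorem sec_mul_of_act_eq {g h : treeAut X} {v : List X} (hh : act h v = v) :
    sec (g * h) v = sec g v * sec h v := by
  rw [sec_mul, hh]

/-- The action of the automorphism group of the tree on a level. -/
noncomputable def levelHom (X : Type*) [Nonempty X] (n : ℕ) :
    treeAut X →* Equiv.Perm {v : List X // v.length = n} where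
  toFun g :=
    { toFun := fun v => ⟨act g v.1, by simp [v.2]⟩
      invFun := fun v => ⟨act g⁻¹ v.1, by simp [v.2]⟩
      left_inv := fun v => by simp
      right_inv := fun v => by simp }
  map_one' := by ext v; simp
  map_mul' g h := by ext v; simp [act_mul]

/-- A uniform power of all automorphisms acts trivially on a given level. -/
theorem exists_pow_act_eq [Finite X] (n : ℕ) :
    ∃ k : ℕ, 0 < k ∧ ∀ (g : treeAut X) (v : List X), v.length = n → act (g ^ k) v = v := by
  have : Finite {v : List X // v.length = n} := List.finite_length_eq X n
  refine ⟨Nat.card (Equiv.Perm {v : List X // v.length = n}), Nat.card_pos, fun g v hv => ?_⟩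
  have h : levelHom X n (g ^ Nat.card (Equiv.Perm {v : List X // v.length = n})) = 1 := by
    rw [map_pow, pow_card_eq_one']
  have h2 := congrArg (fun σ : Equiv.Perm {v : List X // v.length = n} => (σ ⟨v, hv⟩).1) h
  exact h2

end TreeAut

namespace TreeAut

variable {X : Type*} [Nonempty X]

/-- An automorphism with finitely many sections. -/
def FinState (g : treeAut X) : Prop := (Set.range (sec g)).Finite

theorem FinState.sec {g : treeAut X} (h : FinState g) (v : List X) : FinState (sec g v) := by
  refine h.subset ?_
  rintro _ ⟨u, rfl⟩
  exact ⟨v ++ u, sec_append g v u⟩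

theorem finState_one : FinState (1 : treeAut X) := by
  refine (Set.finite_singleton 1).subset ?_
  rintro _ ⟨u, rfl⟩
  simp

theorem FinState.mul {g h : treeAut X} (hg : FinState g) (hh : FinState h) :
    FinState (g * h) := by
  refine (hg.image2 (· * ·) hh).subset ?_
  rintro _ ⟨u, rfl⟩
  exact ⟨_, ⟨act h u, rfl⟩, _, ⟨u, rfl⟩, (sec_mul g h u).symm⟩

theorem FinState.inv {g : treeAut X} (hg : FinState g) : FinState g⁻¹ := by
  refine (hg.image (·⁻¹)).subset ?_
  rintro _ ⟨u, rfl⟩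
  exact ⟨_, ⟨act g⁻¹ u, rfl⟩, (sec_inv g u).symm⟩

variable [Finite X]

open scoped Classical in
/-- The number of words of length `n` at which the section of `g` does not satisfy `P`. -/
noncomputable def secCount (P : treeAut X → Prop) (g : treeAut X) (n : ℕ) : ℕ :=
  ((words X n).filter fun v => ¬ P (sec g v)).card

/-- The hierarchy of classes of automorphisms: `Deg 0` consists of the finitary automorphisms,
and a finite-state automorphism is in `Deg (e + 1)` if the number of words of given length at
which the section is not in `Deg e` is bounded. -/
def Deg : ℕ → treeAut X → Prop
  | 0, g => ∃ n, ∀ v : List X, v.length = n → sec g v = 1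
  | e + 1, g => FinState g ∧ ∃ C, ∀ n, secCount (Deg e) g n ≤ C

theorem secCount_one {P : treeAut X → Prop} (hP : P 1) (n : ℕ) : secCount P 1 n = 0 := by
  simp [secCount, hP]

theorem secCount_mul_le {P : treeAut X → Prop} (hP : ∀ g h, P g → P h → P (g * h))
    (g h : treeAut X) (n : ℕ) : secCount P (g * h) n ≤ secCount P g n + secCount P h n := by
  classical
  have hsub : ((words X n).filter fun v => ¬ P (sec (g * h) v)) ⊆
      (((words X n).filter fun v => ¬ P (sec g v)).image (act h⁻¹)) ∪
        ((words X n).filter fun v => ¬ P (sec h v)) := by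
    intro v hv
    simp only [Finset.mem_filter, mem_words, Finset.mem_union, Finset.mem_image] at hv ⊢
    by_cases hh : P (sec h v)
    · left
      refine ⟨act h v, ⟨by simp [hv.1], fun hg => hv.2 ?_⟩, by simp⟩
      rw [sec_mul]
      exact hP _ _ hg hh
    · exact Or.inr ⟨hv.1, hh⟩
  refine (Finset.card_le_card hsub).trans ((Finset.card_union_le _ _).trans ?_)
  exact Nat.add_le_add_right Finset.card_image_le _

theorem secCount_inv_le {P : treeAut X → Prop} (hP : ∀ g, P g → P g⁻¹)
    (g : treeAut X) (n : ℕ) : secCount P g⁻¹ n ≤ secCount P g n := by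
  classical
  have hsub : ((words X n).filter fun v => ¬ P (sec g⁻¹ v)) ⊆
      (((words X n).filter fun v => ¬ P (sec g v)).image (act g)) := by
    intro v hv
    simp only [Finset.mem_filter, mem_words, Finset.mem_image] at hv ⊢
    refine ⟨act g⁻¹ v, ⟨by simp [hv.1], fun hg => hv.2 ?_⟩, by simp⟩
    rw [sec_inv]
    exact hP _ hg
  exact (Finset.card_le_card hsub).trans Finset.card_image_le

theorem secCount_add (P : treeAut X → Prop) (g : treeAut X) (n m : ℕ) :
    secCount P g (n + m) = ∑ v ∈ words X n, secCount P (sec g v) m := by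
  classical
  simp only [secCount, Finset.card_filter, sum_words_add, sec_append]

theorem secCount_sec_le (P : treeAut X → Prop) (g : treeAut X) (v : List X) (m : ℕ) :
    secCount P (sec g v) m ≤ secCount P g (v.length + m) := by
  rw [secCount_add]
  exact Finset.single_le_sum (f := fun v => secCount P (sec g v) m) (fun _ _ => Nat.zero_le _)
    (mem_words.2 rfl)

theorem secCount_le_card (P : treeAut X → Prop) (g : treeAut X) (n : ℕ) :
    secCount P g n ≤ (words X n).card := by
  classical exact Finset.card_filter_le _ _

theorem finState_of_level {g : treeAut X} (n : ℕ)
    (h : ∀ v : List X, v.length = n → FinState (sec g v)) :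
    FinState g := by
  have h1 : (⋃ v ∈ words X n, Set.range (sec (sec g v))).Finite :=
    (words X n).finite_toSet.biUnion fun v hv => h v (mem_words.1 hv)
  have h2 : (sec g '' {v | v.length ≤ n}).Finite := (List.finite_length_le X n).image _
  refine (h1.union h2).subset ?_
  rintro _ ⟨u, rfl⟩
  rcases le_total n u.length with hu | hu
  · left
    refine Set.mem_biUnion (x := u.take n) (by simp [hu]) ⟨u.drop n, ?_⟩
    rw [← sec_append, List.take_append_drop]
  · exact Or.inr ⟨u, hu, rfl⟩

theorem Deg.finState {e : ℕ} {g : treeAut X} (h : Deg e g) : FinState g := by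
  cases e with
  | zero =>
    obtain ⟨n, hn⟩ := h
    exact finState_of_level n fun v hv => by rw [hn v hv]; exact finState_one
  | succ e => exact h.1

theorem deg_one (e : ℕ) : Deg e (1 : treeAut X) := by
  induction e with
  | zero => exact ⟨0, fun v _ => sec_one v⟩
  | succ e ih => exact ⟨finState_one, 0, fun n => (secCount_one ih n).le⟩

theorem Deg.mul {e : ℕ} {g h : treeAut X} (hg : Deg e g) (hh : Deg e h) : Deg e (g * h) := by
  induction e generalizing g h with
  | zero =>
    obtain ⟨n, hn⟩ := hg
    obtain ⟨m, hm⟩ := hh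
    refine ⟨n + m, fun v hv => ?_⟩
    have key : ∀ (f : treeAut X) (i j : ℕ) (v : List X), v.length = i + j →
        (∀ v : List X, v.length = i → sec f v = 1) → sec f v = 1 := by
      intro f i j v hv hf
      rw [← List.take_append_drop i v, sec_append, hf _ (by simp [hv]), sec_one]
    rw [sec_mul, key g n m _ (by simp [hv]) hn, key h m n _ (by simp [hv, add_comm]) hm, one_mul]
  | succ e ih =>
    obtain ⟨C, hC⟩ := hg.2
    obtain ⟨C', hC'⟩ := hh.2
    exact ⟨hg.1.mul hh.1, C + C', fun n =>
      (secCount_mul_le (fun g h => ih) g h n).trans (Nat.add_le_add (hC n) (hC' n))⟩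

theorem Deg.inv {e : ℕ} {g : treeAut X} (hg : Deg e g) : Deg e g⁻¹ := by
  induction e generalizing g with
  | zero =>
    obtain ⟨n, hn⟩ := hg
    refine ⟨n, fun v hv => ?_⟩
    rw [sec_inv, hn _ (by simp [hv]), inv_one]
  | succ e ih =>
    obtain ⟨C, hC⟩ := hg.2
    exact ⟨hg.1.inv, C, fun n => (secCount_inv_le (P := Deg e) (fun g => ih) g n).trans (hC n)⟩

theorem Deg.sec {e : ℕ} {g : treeAut X} (hg : Deg e g) (v : List X) : Deg e (sec g v) := by
  cases e with
  | zero =>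
    obtain ⟨n, hn⟩ := hg
    refine ⟨n, fun u hu => ?_⟩
    rw [← sec_append, ← List.take_append_drop n (v ++ u), sec_append, hn _ (by simp [hu]),
      sec_one]
  | succ e =>
    obtain ⟨C, hC⟩ := hg.2
    exact ⟨hg.1.sec v, C, fun n => (secCount_sec_le _ g v n).trans (hC _)⟩

theorem Deg.succ {e : ℕ} {g : treeAut X} (hg : Deg e g) : Deg (e + 1) g := by
  refine ⟨hg.finState, 0, fun n => ?_⟩
  simp [secCount, fun v => hg.sec v]

theorem Deg.mono {e e' : ℕ} (h : e ≤ e') {g : treeAut X} (hg : Deg e g) : Deg e' g := by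
  induction e', h using Nat.le_induction with
  | base => exact hg
  | succ n _ ih => exact ih.succ

theorem deg_of_level {e : ℕ} {g : treeAut X} (n : ℕ)
    (h : ∀ v : List X, v.length = n → Deg e (sec g v)) : Deg e g := by
  cases e with
  | zero =>
    have hcl : ∀ v ∈ words X n,
        ∃ m, ∀ u : List X, u.length = m → sec (sec g v) u = 1 :=
      fun v hv => h v (mem_words.1 hv)
    choose! m hm using hcl
    refine ⟨n + (words X n).sup m, fun v hv => ?_⟩
    have hn : (v.take n) ∈ words X n := by simp [hv]
    have hle : m (v.take n) ≤ (words X n).sup m := Finset.le_sup hn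
    rw [← List.take_append_drop n v, sec_append,
      ← List.take_append_drop (m (v.take n)) (v.drop n), sec_append,
      hm _ hn _ (by simp [hv, hle]), sec_one]
  | succ e =>
    refine ⟨finState_of_level n fun v hv => (h v hv).1, ?_⟩
    have hcl : ∀ v ∈ words X n, ∃ C, ∀ m, secCount (Deg e) (sec g v) m ≤ C :=
      fun v hv => (h v (mem_words.1 hv)).2
    choose! C hC using hcl
    refine ⟨∑ v ∈ words X n, C v + ∑ j ∈ Finset.range n, (words X j).card, fun m => ?_⟩
    rcases le_or_gt n m with hm | hm
    · obtain ⟨m, rfl⟩ := Nat.exists_eq_add_of_le hm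
      rw [secCount_add]
      exact (Finset.sum_le_sum fun v hv => hC v hv m).trans (Nat.le_add_right _ _)
    · refine (secCount_le_card _ _ _).trans (le_trans ?_ (Nat.le_add_left _ _))
      exact Finset.single_le_sum (f := fun j => (words X j).card) (fun _ _ => Nat.zero_le _)
        (Finset.mem_range.2 hm)

end TreeAut

namespace TreeAut

variable {X : Type*}

theorem wappend_eq_cat {m : ℕ} (v : Fin m → X) (u : ℕ → X) :
    wappend v u = cat (List.ofFn v) u := by
  induction m with
  | zero => funext i; simp [wappend]
  | succ m ih =>
    rw [List.ofFn_succ, cat, ← ih]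
    funext i
    cases i with
    | zero => simp [wappend]
    | succ i => simp [wappend]

variable [Nonempty X]

theorem restrictFun_eq (g : treeAut X) {m : ℕ} (v : Fin m → X) :
    restrictFun g.1 v = (sec g (List.ofFn v)).1 := by
  funext u j
  rw [sec_apply, restrictFun, wappend_eq_cat, tl, List.length_ofFn]

theorem restrictPerm_eq (g : treeAut X) {m : ℕ} (v : Fin m → X) :
    restrictPerm g.1 v = (sec g (List.ofFn v)).1 := by
  have h : Function.Bijective (restrictFun g.1 v) := by
    rw [restrictFun_eq]; exact Equiv.bijective _
  rw [restrictPerm, dif_pos h]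
  ext1 u
  rw [Equiv.ofBijective_apply, restrictFun_eq]

theorem restrictTrivial_iff (g : treeAut X) {m : ℕ} (v : Fin m → X) :
    RestrictTrivial g.1 v ↔ sec g (List.ofFn v) = 1 := by
  constructor
  · intro h
    refine ext_apply fun u => ?_
    funext j
    rw [← restrictFun_eq, restrictFun, h]
    · simp [wappend]
    · simp [wappend]
    · exact Nat.le_add_right _ _
  · intro h u hu i hi
    obtain ⟨j, rfl⟩ := Nat.exists_eq_add_of_le hi
    have hw : u = wappend v (tl m u) := by
      funext i
      by_cases h : i < m
      · simp [wappend, h, ← hu ⟨i, h⟩]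
      · simp [wappend, h, tl, Nat.add_sub_cancel' (not_lt.1 h)]
    have h2 := congrFun (congrFun (restrictFun_eq g v) (tl m u)) j
    rw [restrictFun, ← hw, h] at h2
    exact h2

theorem finState_of_finiteState {g : treeAut X} (h : FiniteState g.1) : FinState g := by
  refine (h.preimage (f := Subtype.val) Subtype.val_injective.injOn).subset ?_
  rintro _ ⟨v, rfl⟩
  exact ⟨v.length, v.get, by rw [restrictPerm_eq, List.ofFn_get]⟩

/-- Nontrivial sections of `g` do not have two different loops of the same length. -/
def LoopUnique (g : treeAut X) : Prop :=
  ∀ v u u' : List X, sec g v ≠ 1 → u.length = u'.length → sec (sec g v) u = sec g v →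
    sec (sec g v) u' = sec g v → u = u'

theorem LoopUnique.sec {g : treeAut X} (h : LoopUnique g) (v : List X) :
    LoopUnique (sec g v) := by
  intro y u u'
  rw [← sec_append]
  exact h _ u u'

variable [Finite X]

theorem secCount_le_thetaGrowth (g : treeAut X) (n : ℕ) :
    secCount (· = 1) g n ≤ thetaGrowth g.1 n := by
  classical
  rw [secCount, thetaGrowth, ← Set.ncard_coe_finset,
    ← Set.ncard_image_of_injective _ (List.ofFn_injective (n := n) (α := X))]
  refine Set.ncard_le_ncard ?_ (Set.toFinite _)
  intro v hv
  simp only [Finset.coe_filter, mem_words] at hv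
  obtain ⟨rfl, hv⟩ := hv
  exact ⟨v.get, fun h => hv (by simpa only [List.ofFn_get] using (restrictTrivial_iff g _).1 h),
    List.ofFn_get v⟩

theorem deg_zero_of_isFinitary {g : treeAut X} (h : IsFinitary g.1) : Deg 0 g := by
  obtain ⟨n, hn⟩ := h
  refine ⟨n, fun v hv => ext_apply fun u => ?_⟩
  funext j
  rw [sec_apply, tl, hv, hn _ _ (Nat.le_add_right _ _), ← hv, cat_length_add]
  rfl

theorem two_pow_le_secCount {h : treeAut X} (h1 : h ≠ 1) {u u' : List X} (hne : u ≠ u')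
    (hlen : u.length = u'.length) (hu : sec h u = h) (hu' : sec h u' = h) (j : ℕ) :
    2 ^ j ≤ secCount (· = 1) h (u.length * j) := by
  classical
  induction j with
  | zero =>
    rw [pow_zero, Nat.one_le_iff_ne_zero, secCount, Finset.card_ne_zero]
    exact ⟨[], by simp [h1]⟩
  | succ j ih =>
    rw [Nat.mul_succ, add_comm (u.length * j), secCount_add]
    have hsub : ({u, u'} : Finset (List X)) ⊆ words X u.length := by
      intro y hy
      rcases Finset.mem_insert.1 hy with rfl | hy
      · simp
      · rw [Finset.mem_singleton] at hy; subst hy; simp [hlen]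
    have := Finset.sum_le_sum_of_subset (f := fun v => secCount (· = 1) (sec h v) (u.length * j))
      hsub
    rw [Finset.sum_pair hne, hu, hu'] at this
    rw [pow_succ]
    lia

theorem exists_eval_lt_two_pow (p : Polynomial ℕ) (a l : ℕ) :
    ∃ j : ℕ, p.eval (a + l * j) < 2 ^ j := by
  set q : Polynomial ℕ := p.comp (Polynomial.C a + Polynomial.C l * Polynomial.X) with hq
  have hbound : ∀ j : ℕ, 1 ≤ j → q.eval j ≤ q.eval 1 * j ^ q.natDegree := by
    intro j hj
    rw [Polynomial.eval_eq_sum_range, Polynomial.eval_eq_sum_range, Finset.sum_mul]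
    refine Finset.sum_le_sum fun i hi => ?_
    rw [one_pow, mul_one]
    exact Nat.mul_le_mul_left _ (Nat.pow_le_pow_right hj (by
      rw [Finset.mem_range] at hi; lia))
  have ht := tendsto_pow_const_div_const_pow_of_one_lt q.natDegree (r := (2 : ℝ)) one_lt_two
  have hpos : (0 : ℝ) < 1 / (q.eval 1 + 1 : ℝ) := by positivity
  obtain ⟨j, hj, hj1⟩ :=
    ((ht.eventually (gt_mem_nhds hpos)).and (Filter.eventually_ge_atTop 1)).exists
  refine ⟨j, ?_⟩
  have he : p.eval (a + l * j) = q.eval j := by simp [hq]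
  rw [he]
  refine (hbound j hj1).trans_lt ?_
  rw [div_lt_div_iff₀ (by positivity) (by positivity), one_mul] at hj
  have hj' : j ^ q.natDegree * (q.eval 1 + 1) < 2 ^ j := by exact_mod_cast hj
  calc q.eval 1 * j ^ q.natDegree ≤ j ^ q.natDegree * (q.eval 1 + 1) := by
        rw [mul_comm]; exact Nat.mul_le_mul_left _ (Nat.le_succ _)
    _ < 2 ^ j := hj'

theorem loopUnique_of_secCount_le {g : treeAut X} (p : Polynomial ℕ)
    (hp : ∀ n, secCount (· = 1) g n ≤ p.eval n) : LoopUnique g := by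
  intro v u u' h1 hlen hu hu'
  by_contra hne
  obtain ⟨j, hj⟩ := exists_eval_lt_two_pow p v.length u.length
  have h2 := two_pow_le_secCount h1 hne hlen hu hu' j
  have h3 := secCount_sec_le (· = 1) g v (u.length * j)
  have := hp (v.length + u.length * j)
  lia

theorem deg_of_loopUnique {g : treeAut X} (h : LoopUnique g) (hf : FinState g) :
    Deg (Set.range (sec g)).ncard g := by
  classical
  induction hc : (Set.range (sec g)).ncard using Nat.strong_induction_on generalizing g with
  | _ c ih =>
  subst hc
  rcases eq_or_ne g 1 with rfl | h1
  · exact deg_one _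
  have hpos : 0 < (Set.range (sec g)).ncard :=
    (Set.ncard_pos hf).2 ⟨_, [], rfl⟩
  obtain ⟨c, hc⟩ : ∃ c, (Set.range (sec g)).ncard = c + 1 :=
    ⟨_, (Nat.succ_pred_eq_of_pos hpos).symm⟩
  rw [hc] at ih ⊢
  refine ⟨hf, (Set.range (sec g)).ncard, fun n => ?_⟩
  have hloop : ∀ v : List X, ¬ Deg c (sec g v) → ∃ y, sec (sec g v) y = g := by
    intro v hv
    by_contra hno
    apply hv
    have hss : Set.range (sec (sec g v)) ⊂ Set.range (sec g) := by
      refine ⟨?_, fun hsub => ?_⟩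
      · rintro _ ⟨y, rfl⟩
        exact ⟨v ++ y, sec_append g v y⟩
      · exact hno (hsub ⟨[], sec_nil g⟩)
    have hlt := Set.ncard_lt_ncard hss hf
    rw [hc] at hlt
    exact (ih _ hlt (h.sec v) (hf.sec v) rfl).mono (by lia)
  rw [Set.ncard_eq_toFinset_card _ hf]
  refine Finset.card_le_card_of_injOn (sec g) (fun v _ => hf.mem_toFinset.2 ⟨v, rfl⟩) ?_
  intro v hv v' hv' he
  simp only [Finset.coe_filter, mem_words] at hv hv'
  obtain ⟨y, hy⟩ := hloop v hv.2
  have := h [] (v ++ y) (v' ++ y) (by simpa using h1) (by simp [hv.1, hv'.1])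
    (by rw [sec_nil, sec_append, hy]) (by rw [sec_nil, sec_append, ← he, hy])
  exact List.append_cancel_right this

theorem exists_deg_of_memP {d : ℤ} {g : treeAut X} (h : MemP d g.1) : ∃ e, Deg e g := by
  rcases h.2 with ⟨-, h⟩ | ⟨-, hf, p, -, hp⟩
  · exact ⟨0, deg_zero_of_isFinitary h⟩
  · exact ⟨_, deg_of_loopUnique (loopUnique_of_secCount_le p fun n =>
      (secCount_le_thetaGrowth g n).trans (hp n)) (finState_of_finiteState hf)⟩

end TreeAut

namespace TreeAut

open FreeGroup (of lift lift_apply_of)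

variable {X : Type*} [Nonempty X]

theorem tl_apply (g : treeAut X) (n : ℕ) (w : ℕ → X) :
    tl n (g.1 w) = (sec g (pre n w)).1 (tl n w) := by
  rw [sec_apply, length_pre, cat_pre_tl]

theorem eq_one_of_level {g : treeAut X} (n : ℕ) (hact : ∀ v : List X, v.length = n → act g v = v)
    (hsec : ∀ v : List X, v.length = n → sec g v = 1) : g = 1 := by
  refine ext_apply fun w => ?_
  rw [← cat_pre_tl n (g.1 w), tl_apply, ← act_pre, hact _ (length_pre _ _),
    hsec _ (length_pre _ _)]
  exact cat_pre_tl n w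

/-- An automorphism fixing the level of a nonempty word `u`, with section at `u` equal to itself
and all the other sections on the level trivial, is trivial. -/
theorem eq_one_of_loop {g : treeAut X} {u : List X} (hu : u ≠ [])
    (hact : ∀ v : List X, v.length = u.length → act g v = v) (hsecu : sec g u = g)
    (hsec : ∀ v : List X, v.length = u.length → v ≠ u → sec g v = 1) : g = 1 := by
  have hpos := List.length_pos_of_ne_nil hu
  have key : ∀ (n : ℕ) (w : ℕ → X), g.1 w n = w n := by
    intro n
    induction n using Nat.strong_induction_on with
    | _ n ih =>
    intro w
    rcases lt_or_ge n u.length with hn | hn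
    · have h : pre u.length (g.1 w) = pre u.length w := by
        rw [← act_pre, hact _ (length_pre _ _)]
      exact pre_eq_pre_iff.1 h n hn
    · obtain ⟨m, rfl⟩ := Nat.exists_eq_add_of_le hn
      change tl u.length (g.1 w) m = tl u.length w m
      rw [tl_apply]
      by_cases hw : pre u.length w = u
      · rw [hw, hsecu, ih m (by lia)]
      · rw [hsec _ (length_pre _ _) hw]
        rfl
  exact ext_apply fun w => funext fun n => key n w

section Hom

variable {G : Type*} [Group G]

/-- The subgroup of elements acting trivially on the level `n`. -/
noncomputable def levelStab (φ : G →* treeAut X) (n : ℕ) : Subgroup G :=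
  ((levelHom X n).comp φ).ker

theorem mem_levelStab {φ : G →* treeAut X} {n : ℕ} {z : G} :
    z ∈ levelStab φ n ↔ ∀ v : List X, v.length = n → act (φ z) v = v := by
  rw [levelStab, MonoidHom.mem_ker, Equiv.ext_iff, Subtype.forall]
  refine forall₂_congr fun v hv => ?_
  rw [Subtype.ext_iff]
  rfl

/-- The subgroup of elements that fix the word `v` and have trivial section at `v`. -/
noncomputable def secKer (φ : G →* treeAut X) (v : List X) : Subgroup G where
  carrier := {z | act (φ z) v = v ∧ sec (φ z) v = 1}
  one_mem' := by simp
  mul_mem' := by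
    rintro a b ⟨ha, ha'⟩ ⟨hb, hb'⟩
    constructor
    · rw [map_mul, act_mul, hb, ha]
    · rw [map_mul, sec_mul, hb, ha', hb', one_mul]
  inv_mem' := by
    rintro a ⟨ha, ha'⟩
    have h : act (φ a)⁻¹ v = v := by
      conv_lhs => rw [← ha]
      exact act_inv_act _ _
    constructor
    · rw [map_inv, h]
    · rw [map_inv, sec_inv, h, ha', inv_one]

theorem mem_secKer {φ : G →* treeAut X} {v : List X} {z : G} :
    z ∈ secKer φ v ↔ act (φ z) v = v ∧ sec (φ z) v = 1 := Iff.rfl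

theorem mem_secKer_append {φ : G →* treeAut X} {v : List X} {z : G} (h : z ∈ secKer φ v)
    (u : List X) : z ∈ secKer φ (v ++ u) := by
  rw [mem_secKer] at h ⊢
  rw [act_append, sec_append, h.1, h.2]
  simp

theorem conj_mem_secKer {φ : G →* treeAut X} {v : List X} {n z : G}
    (hn : act (φ n) v = v) (h : z ∈ secKer φ v) : n * z * n⁻¹ ∈ secKer φ v := by
  rw [mem_secKer] at h ⊢
  have hn' : act (φ n)⁻¹ v = v := by
    conv_lhs => rw [← hn]
    exact act_inv_act _ _
  simp only [map_mul, map_inv, act_mul, sec_mul, sec_inv, hn', h.1, h.2, hn]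
  simp

/-- The homomorphism given by sections at a fixed word. -/
noncomputable def secHom (φ : G →* treeAut X) (v : List X) (h : ∀ z, act (φ z) v = v) :
    G →* treeAut X where
  toFun z := sec (φ z) v
  map_one' := by simp
  map_mul' a b := by rw [map_mul, sec_mul_of_act_eq (h b)]

end Hom

variable [Finite X]

/-- Elements of the free group acting trivially on a level and having trivial sections
simultaneously at several words of this level. -/
theorem exists_ne_one_mem_secKer (φ : FreeGroup (Fin 2) →* treeAut X) {n : ℕ}
    (s : Finset (List X)) (hs : ∀ v ∈ s, v.length = n)
    (h : ∀ v ∈ s, ∃ x ∈ secKer φ v, x ≠ 1) :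
    ∃ z ∈ levelStab φ n, z ≠ 1 ∧ ∀ v ∈ s, z ∈ secKer φ v := by
  obtain ⟨k, hk, hpow⟩ := exists_pow_act_eq (X := X) n
  have hN : ∀ t, t ^ k ∈ levelStab φ n := fun t => mem_levelStab.2 fun v hv => by
    rw [map_pow, hpow _ _ hv]
  obtain ⟨z, hz, hz1, hzs⟩ := exists_ne_one_mem_of_normalized (levelStab φ n) hk hN
    (fun v : {v : List X // v.length = n} => secKer φ v.1)
    (fun v g hg x hx => conj_mem_secKer (mem_levelStab.1 hg v.1 v.2) hx)
    (s.subtype (fun v => v.length = n)) (fun v hv => by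
      obtain ⟨x, hx, hx1⟩ := h v.1 (Finset.mem_subtype.1 hv)
      exact ⟨x ^ k, Subgroup.pow_mem _ hx k, hN x, by simpa [hk.ne'] using hx1⟩)
  exact ⟨z, hz, hz1, fun v hv => hzs ⟨v, hs v hv⟩ (Finset.mem_subtype.2 hv)⟩

/-- For a faithful action of a free group on the tree there is a point of the boundary such that
no nontrivial element acts trivially on a neighborhood of this point. -/
theorem exists_germ_faithful {φ : FreeGroup (Fin 2) →* treeAut X} (hφ : Function.Injective φ) :
    ∃ w : ℕ → X, ∀ z ≠ 1, ∀ n, z ∉ secKer φ (pre n w) := by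
  by_contra! hcon
  let _ : TopologicalSpace X := ⊥
  have : DiscreteTopology X := ⟨rfl⟩
  have hpre : ∀ (n : ℕ) (w : ℕ → X), pre n w = List.ofFn fun i : Fin n => w i := fun n w => by
    rw [pre, List.ofFn_eq_map, ← List.map_coe_finRange_eq_range, List.map_map]
    rfl
  obtain ⟨n, hn⟩ := isCompact_univ.elim_directed_cover
    (fun n => {w : ℕ → X | ∃ z ≠ 1, z ∈ secKer φ (pre n w)})
    (fun n => by
      have : IsOpen ((fun (w : ℕ → X) (i : Fin n) => w i) ⁻¹'
          {f | ∃ z ≠ 1, z ∈ secKer φ (List.ofFn f)}) :=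
        (isOpen_discrete _).preimage (by fun_prop)
      simp only [hpre]
      exact this)
    (fun w _ => by
      obtain ⟨z, hz, n, hzn⟩ := hcon w
      exact Set.mem_iUnion.2 ⟨n, z, hz, hzn⟩)
    (directed_of_isDirected_le fun n m hnm => by
      rintro w ⟨z, hz, hzn⟩
      obtain ⟨j, rfl⟩ := Nat.exists_eq_add_of_le hnm
      refine ⟨z, hz, ?_⟩
      rw [pre_add]
      exact mem_secKer_append hzn _)
  obtain ⟨z, hzN, hz1, hz⟩ := exists_ne_one_mem_secKer φ (n := n) (words X n)
    (fun v hv => mem_words.1 hv) (fun v hv => by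
      obtain ⟨w, hw⟩ := exists_pre_eq v
      obtain ⟨z, hz, hzn⟩ := hn (Set.mem_univ w)
      rw [mem_words] at hv
      rw [← hv, hw] at hzn
      exact ⟨z, hzn, hz⟩)
  apply hz1
  apply hφ
  rw [map_one]
  exact eq_one_of_level n (mem_levelStab.1 hzN) fun v hv => (hz v (mem_words.2 hv)).2

/-- If an automorphism in the class `Deg (e + 1)` is equal to its section at `u`, then all the
other sections on the level of `u` belong to `Deg e`. -/
theorem Deg.sec_of_loop {e : ℕ} {g : treeAut X} (hg : Deg (e + 1) g) {u y : List X}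
    (hu : TreeAut.sec g u = g) (hlen : y.length = u.length) (hy : y ≠ u) :
    Deg e (TreeAut.sec g y) := by
  classical
  by_contra hno
  obtain ⟨C, hC⟩ := hg.2
  have hpos : ∀ n, 1 ≤ secCount (Deg e) (TreeAut.sec g y) n := by
    intro n
    rw [Nat.one_le_iff_ne_zero, secCount, Finset.card_ne_zero]
    by_contra hemp
    rw [Finset.not_nonempty_iff_eq_empty, Finset.filter_eq_empty_iff] at hemp
    exact hno (deg_of_level n fun v hv => not_not.1 (hemp (mem_words.2 hv)))
  have hk : ∀ k, k ≤ secCount (Deg e) g (u.length * k) := by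
    intro k
    induction k with
    | zero => exact Nat.zero_le _
    | succ k ih =>
      rw [Nat.mul_succ, add_comm (u.length * k), secCount_add]
      have hsub : ({u, y} : Finset (List X)) ⊆ words X u.length := by
        intro v hv
        rcases Finset.mem_insert.1 hv with rfl | hv
        · simp
        · rw [Finset.mem_singleton] at hv; subst hv; simp [hlen]
      have := Finset.sum_le_sum_of_subset
        (f := fun v => secCount (Deg e) (TreeAut.sec g v) (u.length * k)) hsub
      rw [Finset.sum_pair hy.symm, hu] at this
      have := hpos (u.length * k)
      lia
  have := (hk (C + 1)).trans (hC _)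
  lia

/-- A free group acting in the class `Deg (e + 1)` does not fix a point of the boundary with
faithful action of germs, provided that there are no free groups in the class `Deg e`. -/
theorem not_fixed_of_germ_faithful {e : ℕ}
    (IH : ∀ χ : FreeGroup (Fin 2) →* treeAut X, (∀ z, Deg e (χ z)) → ¬ Function.Injective χ)
    (ψ : FreeGroup (Fin 2) →* treeAut X) (hψ : ∀ z, Deg (e + 1) (ψ z)) (w : ℕ → X)
    (hw : ∀ z ≠ 1, ∀ n, z ∉ secKer ψ (pre n w)) (hfix : ∀ z, (ψ z).1 w = w) : False := by
  classical
  have hact : ∀ n z, act (ψ z) (pre n w) = pre n w := fun n z => by rw [act_pre, hfix]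
  obtain ⟨n, m, hnm, heq⟩ := Set.Finite.exists_lt_map_eq_of_forall_mem
    (t := Set.range (sec (ψ (of 0))) ×ˢ Set.range (sec (ψ (of 1))))
    (f := fun n => (sec (ψ (of 0)) (pre n w), sec (ψ (of 1)) (pre n w)))
    (fun n => ⟨⟨_, rfl⟩, ⟨_, rfl⟩⟩) ((hψ _).finState.prod (hψ _).finState)
  obtain ⟨l, rfl⟩ := Nat.exists_eq_add_of_le hnm.le
  set u := pre l (tl n w) with hu
  have hpre : pre (n + l) w = pre n w ++ u := pre_add n l w
  have hul : u.length = l := length_pre _ _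
  set ρ := secHom ψ (pre n w) (hact n) with hρ
  have hρz : ∀ z, ρ z = sec (ψ z) (pre n w) := fun z => rfl
  have hρact : ∀ z, act (ρ z) u = u := by
    intro z
    have h := hact (n + l) z
    rw [hpre, act_append, hact n z] at h
    exact List.append_cancel_left h
  have hρsec : ∀ z, sec (ρ z) u = ρ z := by
    intro z
    have hext : secHom ψ (pre (n + l) w) (hact _) = ρ := by
      refine FreeGroup.ext_hom _ _ fun i => ?_
      rw [Prod.mk.injEq] at heq
      fin_cases i
      · exact heq.1.symm
      · exact heq.2.symm
    have h := DFunLike.congr_fun hext z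
    rw [hρz, ← sec_append, ← hpre, ← hρz z]
    exact h
  have hne : u ≠ [] := by
    intro h0
    rw [h0] at hul
    simp at hul
    lia
  have hinj : ∀ z, ρ z = 1 → z = 1 := by
    intro z hz
    by_contra h1
    exact hw z h1 n ⟨hact n z, hz⟩
  obtain ⟨k, hk, hpow⟩ := exists_pow_act_eq (X := X) l
  set κ : FreeGroup (Fin 2) →* FreeGroup (Fin 2) := lift fun i => of i ^ k with hκ
  have hκstab : ∀ z, κ z ∈ levelStab ρ l := by
    intro z
    induction z using FreeGroup.induction_on with
    | C1 => rw [map_one]; exact one_mem _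
    | of i =>
      rw [hκ, lift_apply_of]
      exact mem_levelStab.2 fun v hv => by rw [map_pow, hpow _ _ hv]
    | inv_of i h => rw [map_inv]; exact inv_mem h
    | mul a b ha hb => rw [map_mul]; exact mul_mem ha hb
  obtain ⟨z, hzN, hz1, hz⟩ := exists_ne_one_mem_secKer ρ (n := l) ((words X l).erase u)
    (fun v hv => mem_words.1 (Finset.mem_of_mem_erase hv)) (fun y hy => by
      rw [Finset.mem_erase, mem_words] at hy
      have hstab : ∀ z, act ((ρ.comp κ) z) y = y := fun z => mem_levelStab.1 (hκstab z) y hy.2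
      have hnot := IH (secHom (ρ.comp κ) y hstab) fun z =>
        ((hψ (κ z)).sec (pre n w)).sec_of_loop (hρsec (κ z)) (hy.2.trans hul.symm) hy.1
      rw [injective_iff_map_eq_one] at hnot
      push Not at hnot
      obtain ⟨x, hx, hx1⟩ := hnot
      refine ⟨κ x, ⟨hstab x, hx⟩, fun h => hx1 ?_⟩
      exact lift_pow_injective hk (h.trans (map_one _).symm))
  refine hz1 (hinj z (eq_one_of_loop hne (fun v hv => ?_) (hρsec z) fun v hv hvu => ?_))
  · exact mem_levelStab.1 hzN v (hv.trans hul)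
  · exact (hz v (Finset.mem_erase.2 ⟨hvu, mem_words.2 (hv.trans hul)⟩)).2

end TreeAut

namespace TreeAut

open FreeGroup (of lift lift_apply_of)

variable {X : Type*} [Nonempty X] [Finite X]

open scoped Classical in
/-- The total weight of the words of length `n` at which `g` has a nontrivial section. -/
noncomputable def secWeight (μ : List X → ℝ) (g : treeAut X) (n : ℕ) : ℝ :=
  ∑ v ∈ words X n, if sec g v = 1 then 0 else μ v

/-- For a finitely additive measure on the boundary without atoms and for an automorphism in one
of the classes `Deg e`, the measure of the set of words with nontrivial sections tends to zero. -/
theorem Deg.exists_secWeight_le {e : ℕ} {g : treeAut X} (hg : Deg e g) {μ : List X → ℝ}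
    (hpos : ∀ v, 0 ≤ μ v) (hadd : ∀ v n, ∑ u ∈ words X n, μ (v ++ u) = μ v)
    (hatom : ∀ ε > 0, ∃ n, ∀ v : List X, n ≤ v.length → μ v ≤ ε) {ε : ℝ} (hε : 0 < ε) :
    ∃ N, ∀ n ≥ N, secWeight μ g n ≤ ε := by
  classical
  induction e generalizing g μ ε with
  | zero =>
    obtain ⟨N, hN⟩ := hg
    refine ⟨N, fun n hn => ?_⟩
    rw [secWeight, Finset.sum_eq_zero]
    · exact hε.le
    · intro v hv
      rw [mem_words] at hv
      have : TreeAut.sec g v = 1 := by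
        rw [← List.take_append_drop N v, sec_append, hN _ (by simp [hv, hn]), sec_one]
      rw [if_pos this]
  | succ e ih =>
    obtain ⟨C, hC⟩ := hg.2
    obtain ⟨n, hn⟩ := hatom (ε / 2 / (C + 1)) (by positivity)
    set W : ℝ := ((words X n).card : ℝ)
    have hW0 : 0 ≤ W := Nat.cast_nonneg _
    have hex : ∀ v : List X, ∃ N, Deg e (TreeAut.sec g v) →
        ∀ m ≥ N, secWeight (fun u => μ (v ++ u)) (TreeAut.sec g v) m ≤ ε / 2 / (W + 1) := by
      intro v
      by_cases hv : Deg e (TreeAut.sec g v)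
      · obtain ⟨N, hN⟩ := ih hv (μ := fun u => μ (v ++ u)) (fun u => hpos _)
          (fun u m => by simpa only [List.append_assoc] using hadd (v ++ u) m)
          (fun ε hε => by
            obtain ⟨n, hn⟩ := hatom ε hε
            exact ⟨n, fun u hu => hn _ (by rw [List.length_append]; lia)⟩)
          (ε := ε / 2 / (W + 1)) (by positivity)
        exact ⟨N, fun _ => hN⟩
      · exact ⟨0, fun h => absurd h hv⟩
    choose N hN using hex
    refine ⟨n + (words X n).sup N, fun m hm => ?_⟩
    obtain ⟨m, rfl⟩ := Nat.exists_eq_add_of_le (le_trans (Nat.le_add_right _ _) hm)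
    have hsplit : secWeight μ g (n + m) =
        ∑ v ∈ words X n, secWeight (fun u => μ (v ++ u)) (TreeAut.sec g v) m := by
      simp only [secWeight, sum_words_add, sec_append]
    have hterm : ∀ v ∈ words X n, secWeight (fun u => μ (v ++ u)) (TreeAut.sec g v) m ≤
        (if ¬ Deg e (TreeAut.sec g v) then ε / 2 / (C + 1) else 0) + ε / 2 / (W + 1) := by
      intro v hv
      by_cases hd : Deg e (TreeAut.sec g v)
      · rw [if_neg (not_not.2 hd), zero_add]
        refine hN v hd m ?_
        have : N v ≤ (words X n).sup N := Finset.le_sup hv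
        lia
      · rw [if_pos hd]
        refine le_add_of_le_of_nonneg ?_ (by positivity)
        refine le_trans ?_ (hn v (mem_words.1 hv).ge)
        rw [← hadd v m]
        refine Finset.sum_le_sum fun u _ => ?_
        split_ifs
        · exact hpos _
        · exact le_rfl
    rw [hsplit]
    refine (Finset.sum_le_sum hterm).trans ?_
    rw [Finset.sum_add_distrib, ← Finset.sum_filter, Finset.sum_const, Finset.sum_const,
      nsmul_eq_mul, nsmul_eq_mul]
    have hc : (((words X n).filter fun v => ¬ Deg e (TreeAut.sec g v)).card : ℝ) ≤ C := by
      exact_mod_cast hC n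
    have h1 : (((words X n).filter fun v => ¬ Deg e (TreeAut.sec g v)).card : ℝ) *
        (ε / 2 / (C + 1)) ≤ ε / 2 := by
      rw [mul_div_assoc', div_le_iff₀ (by positivity)]
      nlinarith
    have h2 : W * (ε / 2 / (W + 1)) ≤ ε / 2 := by
      rw [mul_div_assoc', div_le_iff₀ (by positivity)]
      nlinarith
    linarith

section Orbit

variable {G : Type*} [Group G] (φ : G →* treeAut X) (w : ℕ → X)

open scoped Classical in
/-- The orbit of the beginning of length `n` of a sequence. -/
noncomputable def orb (n : ℕ) : Finset (List X) :=
  (words X n).filter fun v => ∃ z, act (φ z) (pre n w) = v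

variable {φ w}

theorem mem_orb {n : ℕ} {v : List X} : v ∈ orb φ w n ↔ ∃ z, act (φ z) (pre n w) = v := by
  classical
  rw [orb, Finset.mem_filter, mem_words, and_iff_right_iff_imp]
  rintro ⟨z, rfl⟩
  simp

theorem length_of_mem_orb {n : ℕ} {v : List X} (h : v ∈ orb φ w n) : v.length = n := by
  obtain ⟨z, rfl⟩ := mem_orb.1 h
  simp

theorem pre_mem_orb (n : ℕ) : pre n w ∈ orb φ w n := mem_orb.2 ⟨1, by simp⟩

theorem act_mem_orb {n : ℕ} {v : List X} (h : v ∈ orb φ w n) (z : G) :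
    act (φ z) v ∈ orb φ w n := by
  obtain ⟨y, rfl⟩ := mem_orb.1 h
  exact mem_orb.2 ⟨z * y, by rw [map_mul, act_mul]⟩

theorem mem_orb_of_append {n m : ℕ} {v u : List X} (hv : v.length = n)
    (h : v ++ u ∈ orb φ w (n + m)) : v ∈ orb φ w n := by
  obtain ⟨z, hz⟩ := mem_orb.1 h
  rw [pre_add, act_append] at hz
  exact mem_orb.2 ⟨z, (List.append_inj hz (by simp [hv])).1⟩

open scoped Classical in
theorem card_orb_add {n m : ℕ} {v : List X} (hv : v ∈ orb φ w n) :
    (orb φ w (n + m)).card =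
      (orb φ w n).card * ((words X m).filter fun u => v ++ u ∈ orb φ w (n + m)).card := by
  have hle : ∀ v ∈ orb φ w n, ∀ v' ∈ orb φ w n,
      ((words X m).filter fun u => v ++ u ∈ orb φ w (n + m)).card ≤
        ((words X m).filter fun u => v' ++ u ∈ orb φ w (n + m)).card := by
    intro v hv v' hv'
    obtain ⟨y, rfl⟩ := mem_orb.1 hv
    obtain ⟨y', rfl⟩ := mem_orb.1 hv'
    set v := act (φ y) (pre n w)
    have hact : act (φ (y' * y⁻¹)) v = act (φ y') (pre n w) := by
      rw [map_mul, act_mul, map_inv, act_inv_act]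
    refine Finset.card_le_card_of_injOn (act (sec (φ (y' * y⁻¹)) v)) (fun u hu => ?_)
      (act_injective _).injOn
    simp only [Finset.coe_filter, mem_words] at hu ⊢
    refine ⟨by simp [hu.1], ?_⟩
    rw [← hact, ← act_append]
    exact act_mem_orb hu.2 _
  have hsum : (orb φ w (n + m)).card = ∑ v ∈ orb φ w n,
      ((words X m).filter fun u => v ++ u ∈ orb φ w (n + m)).card := by
    have h1 : (orb φ w (n + m)).card =
        ∑ v ∈ words X (n + m), if v ∈ orb φ w (n + m) then 1 else 0 := by
      rw [← Finset.card_filter]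
      congr 1
      ext v
      rw [Finset.mem_filter, mem_words]
      exact ⟨fun h => ⟨length_of_mem_orb h, h⟩, fun h => h.2⟩
    rw [h1, sum_words_add]
    simp only [Finset.card_filter]
    symm
    refine Finset.sum_subset (fun v hv => mem_words.2 (length_of_mem_orb hv)) fun v hv hvo => ?_
    refine Finset.sum_eq_zero fun u _ => if_neg fun h => hvo ?_
    exact mem_orb_of_append (mem_words.1 hv) h
  rw [hsum, Finset.sum_congr rfl fun v' hv' => le_antisymm (hle v' hv' v hv) (hle v hv v' hv'),
    Finset.sum_const, smul_eq_mul]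

variable (φ w) in
open scoped Classical in
/-- The uniform distribution on the orbits of the beginnings of a sequence. -/
noncomputable def orbWeight (v : List X) : ℝ :=
  if v ∈ orb φ w v.length then ((orb φ w v.length).card : ℝ)⁻¹ else 0

theorem orbWeight_nonneg (v : List X) : 0 ≤ orbWeight φ w v := by
  unfold orbWeight
  positivity

theorem card_orb_pos (n : ℕ) : 0 < (orb φ w n).card :=
  Finset.card_pos.2 ⟨_, pre_mem_orb n⟩

theorem sum_orbWeight (v : List X) (m : ℕ) :
    ∑ u ∈ words X m, orbWeight φ w (v ++ u) = orbWeight φ w v := by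
  classical
  have hterm : ∀ u ∈ words X m, orbWeight φ w (v ++ u) =
      if v ++ u ∈ orb φ w (v.length + m) then ((orb φ w (v.length + m)).card : ℝ)⁻¹ else 0 := by
    intro u hu
    rw [mem_words] at hu
    rw [orbWeight, List.length_append, hu]
  rw [Finset.sum_congr rfl hterm]
  by_cases hv : v ∈ orb φ w v.length
  · rw [← Finset.sum_filter, Finset.sum_const, nsmul_eq_mul, orbWeight, if_pos hv]
    have hcard := card_orb_add (m := m) hv
    have hpos := card_orb_pos (φ := φ) (w := w) (v.length + m)
    have h0 : ((orb φ w (v.length + m)).card : ℝ) ≠ 0 := by exact_mod_cast hpos.ne'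
    have h1 : ((orb φ w v.length).card : ℝ) ≠ 0 := by exact_mod_cast (card_orb_pos v.length).ne'
    rw [mul_inv_eq_iff_eq_mul₀ h0, eq_inv_mul_iff_mul_eq₀ h1]
    exact_mod_cast hcard.symm
  · rw [orbWeight, if_neg hv]
    exact Finset.sum_eq_zero fun u _ => if_neg fun h => hv (mem_orb_of_append rfl h)

end Orbit

/-- The orbits of the beginnings of a point with trivial stabilizer are arbitrarily large. -/
theorem exists_le_card_orb {φ : FreeGroup (Fin 2) →* treeAut X} {w : ℕ → X}
    (hfree : ∀ z, (φ z).1 w = w → z = 1) (K : ℕ) : ∃ N, ∀ n ≥ N, K ≤ (orb φ w n).card := by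
  classical
  have hinj : ∀ i j : ℕ, i ≠ j → (φ (of 0 ^ i)).1 w ≠ (φ (of 0 ^ j)).1 w := by
    intro i j hij h
    have h1 := hfree ((of 0 ^ j)⁻¹ * of 0 ^ i) (by
      rw [map_mul, map_inv]
      change (φ (of 0 ^ j)).1⁻¹ ((φ (of 0 ^ i)).1 w) = w
      rw [h]
      exact Equiv.symm_apply_apply _ _)
    rw [inv_mul_eq_one] at h1
    exact hij (IsMulTorsionFree.pow_right_injective (FreeGroup.of_ne_one 0) h1.symm)
  have hsep : ∀ p : ℕ × ℕ, ∃ n, p.1 ≠ p.2 →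
      pre n ((φ (of 0 ^ p.1)).1 w) ≠ pre n ((φ (of 0 ^ p.2)).1 w) := by
    intro p
    by_contra! h
    exact hinj _ _ (h 0).1 (eq_of_forall_pre_eq fun n => (h n).2)
  choose N hN using hsep
  refine ⟨(Finset.range K ×ˢ Finset.range K).sup N, fun n hn => ?_⟩
  rw [← Finset.card_range K]
  refine Finset.card_le_card_of_injOn (fun i => pre n ((φ (of 0 ^ i)).1 w))
    (fun i _ => mem_orb.2 ⟨of 0 ^ i, act_pre _ _ _⟩) ?_
  intro i hi j hj he
  by_contra hij
  have hle : N (i, j) ≤ n := le_trans (Finset.le_sup (Finset.mem_product.2 ⟨hi, hj⟩)) hn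
  refine hN (i, j) hij (pre_eq_pre_iff.2 fun l hl => ?_)
  exact pre_eq_pre_iff.1 he l (hl.trans_le hle)

open scoped Classical in
/-- For a free orbit, the edges of the Schreier graph of an orbit of words that have trivial
sections form a forest. -/
theorem card_uncut_le {φ : FreeGroup (Fin 2) →* treeAut X} {w : ℕ → X}
    (hfree : ∀ z, (φ z).1 w = w → z = 1) (n : ℕ) :
    ∑ i : Fin 2, ((orb φ w n).filter fun v => sec (φ (of i)) v = 1).card ≤
      (orb φ w n).card := by
  have huniq : ∀ r ∈ orb φ w n, ∀ z z', act (φ z) r = act (φ z') r → sec (φ z) r = 1 →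
      sec (φ z') r = 1 → z = z' := by
    intro r hr z z' hact hz hz'
    obtain ⟨y, rfl⟩ := mem_orb.1 hr
    rw [act_pre] at hact hz hz'
    have heq : (φ z).1 ((φ y).1 w) = (φ z').1 ((φ y).1 w) := by
      rw [← cat_pre_tl n ((φ y).1 w), apply_cat, apply_cat, hact, hz, hz']
    have h1 := hfree ((z' * y)⁻¹ * (z * y)) (by
      rw [map_mul, map_inv, map_mul, map_mul]
      change ((φ z') * (φ y)).1⁻¹ ((φ z).1 ((φ y).1 w)) = w
      rw [heq]
      exact Equiv.symm_apply_apply _ _)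
    rw [inv_mul_eq_one] at h1
    exact (mul_right_cancel h1).symm
  let S : Setoid (List X) :=
    { r := fun v v' => ∃ z, act (φ z) v = v' ∧ sec (φ z) v = 1
      iseqv :=
        { refl := fun v => ⟨1, by simp⟩
          symm := by
            rintro v _ ⟨z, rfl, hz⟩
            exact ⟨z⁻¹, by simp, by rw [map_inv, sec_inv, act_inv_act, hz, inv_one]⟩
          trans := by
            rintro v _ _ ⟨z, rfl, hz⟩ ⟨z', rfl, hz'⟩
            exact ⟨z' * z, by rw [map_mul, act_mul],
              by rw [map_mul, sec_mul, hz, hz', one_mul]⟩ } }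
  have hrep : ∀ v : List X, ∃ z, act (φ z) (Quotient.mk S v).out = v ∧
      sec (φ z) (Quotient.mk S v).out = 1 := fun v => Quotient.mk_out (s := S) v
  choose z hzact hzsec using hrep
  let T : List X → Fin 2 × List X := fun v =>
    match (z v).toWord.head? with
    | some (i, true) => (i, act (φ (of i))⁻¹ v)
    | some (i, false) => (i, v)
    | none => (0, v)
  have hsub : (Finset.univ.sigma fun i : Fin 2 =>
      (orb φ w n).filter fun v => sec (φ (of i)) v = 1).image (fun p => (p.1, p.2)) ⊆
        (orb φ w n).image T := by
    rintro ⟨i, v⟩ hp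
    obtain ⟨⟨j, u⟩, hm, he⟩ := Finset.mem_image.1 hp
    simp only [Prod.mk.injEq] at he
    obtain ⟨rfl, rfl⟩ := he
    simp only [Finset.mem_sigma, Finset.mem_univ, true_and, Finset.mem_filter] at hm
    obtain ⟨hu, hsec⟩ := hm
    rw [Finset.mem_image]
    have hcls : Quotient.mk S (act (φ (of j)) u) = Quotient.mk S u :=
      Quotient.sound (s := S) (S.symm ⟨of j, rfl, hsec⟩)
    have hr : (Quotient.mk S u).out ∈ orb φ w n := by
      have h := act_mem_orb hu (z u)⁻¹
      rwa [map_inv, ← hzact u, hzact u, ← congrArg (act (φ (z u))⁻¹) (hzact u), act_inv_act] at h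
    have hz : z (act (φ (of j)) u) = of j * z u := by
      refine huniq _ hr _ _ ?_ ?_ ?_
      · rw [← hcls, hzact, hcls, map_mul, act_mul, hzact]
      · rw [← hcls, hzsec]
      · rw [map_mul, sec_mul, hzact, hzsec, hsec, one_mul]
    rcases toWord_of_mul j (z u) with h | h
    · refine ⟨act (φ (of j)) u, act_mem_orb hu _, ?_⟩
      simp only [T, hz, h, act_inv_act]
    · exact ⟨u, hu, by simp only [T, h]⟩
  rw [← Finset.card_sigma, ← Finset.card_image_of_injOn (f := fun p => (p.1, p.2))]
  · exact (Finset.card_le_card hsub).trans Finset.card_image_le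
  · rintro ⟨i, v⟩ _ ⟨j, u⟩ _ h
    simp only [Prod.mk.injEq] at h
    rw [h.1, h.2]

/-- A free group acting in a class `Deg e` does not have free orbits on the boundary. -/
theorem exists_ne_one_apply_eq {e : ℕ} {φ : FreeGroup (Fin 2) →* treeAut X}
    (hφ : ∀ z, Deg e (φ z)) (w : ℕ → X) : ∃ z ≠ 1, (φ z).1 w = w := by
  classical
  by_contra! hcon
  have hfree : ∀ z, (φ z).1 w = w → z = 1 := fun z hz => by
    by_contra h
    exact hcon z h hz
  have hatom : ∀ ε > 0, ∃ n, ∀ v : List X, n ≤ v.length → orbWeight φ w v ≤ ε := by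
    intro ε hε
    obtain ⟨K, hK⟩ := exists_nat_gt (ε⁻¹)
    obtain ⟨N, hN⟩ := exists_le_card_orb hfree K
    refine ⟨N, fun v hv => ?_⟩
    rw [orbWeight]
    split_ifs
    · refine inv_le_of_inv_le₀ hε (hK.le.trans ?_)
      exact_mod_cast hN _ hv
    · exact hε.le
  have hsmall : ∀ i : Fin 2, ∃ N, ∀ n ≥ N,
      secWeight (orbWeight φ w) (φ (of i)) n ≤ 1 / 4 := fun i =>
    (hφ (of i)).exists_secWeight_le orbWeight_nonneg sum_orbWeight hatom (by norm_num)
  choose N hN using hsmall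
  set n := max (N 0) (N 1) with hn
  have hcut : ∀ i : Fin 2, (((orb φ w n).filter fun v => ¬ sec (φ (of i)) v = 1).card : ℝ) ≤
      (orb φ w n).card / 4 := by
    intro i
    have hi : N i ≤ n := by fin_cases i <;> simp [hn]
    have h := hN i n hi
    have hle : ((orb φ w n).filter fun v => ¬ sec (φ (of i)) v = 1).card *
        ((orb φ w n).card : ℝ)⁻¹ ≤ secWeight (orbWeight φ w) (φ (of i)) n := by
      rw [← nsmul_eq_mul, ← Finset.sum_const, secWeight]
      have hsub : ((orb φ w n).filter fun v => ¬ sec (φ (of i)) v = 1) ⊆ words X n :=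
        fun v hv => mem_words.2 (length_of_mem_orb (Finset.mem_filter.1 hv).1)
      refine le_trans (Finset.sum_le_sum fun v hv => ?_)
        (Finset.sum_le_sum_of_subset_of_nonneg hsub fun v _ _ => ?_)
      · rw [Finset.mem_filter] at hv
        rw [if_neg hv.2, orbWeight, length_of_mem_orb hv.1, if_pos hv.1]
      · split_ifs
        · exact le_rfl
        · exact orbWeight_nonneg v
    have hpos : (0 : ℝ) < (orb φ w n).card := by exact_mod_cast card_orb_pos n
    have h2 := hle.trans h
    rw [mul_inv_le_iff₀ hpos] at h2
    linarith
  have huncut := card_uncut_le hfree n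
  rw [Fin.sum_univ_two] at huncut
  have hsplit : ∀ i : Fin 2, ((orb φ w n).filter fun v => sec (φ (of i)) v = 1).card +
      ((orb φ w n).filter fun v => ¬ sec (φ (of i)) v = 1).card = (orb φ w n).card :=
    fun i => Finset.card_filter_add_card_filter_not _
  have h0 : (((orb φ w n).filter fun v => sec (φ (of 0)) v = 1).card : ℝ) +
      ((orb φ w n).filter fun v => ¬ sec (φ (of 0)) v = 1).card = (orb φ w n).card := by
    exact_mod_cast hsplit 0
  have h1 : (((orb φ w n).filter fun v => sec (φ (of 1)) v = 1).card : ℝ) +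
      ((orb φ w n).filter fun v => ¬ sec (φ (of 1)) v = 1).card = (orb φ w n).card := by
    exact_mod_cast hsplit 1
  have h2 : (((orb φ w n).filter fun v => sec (φ (of 0)) v = 1).card : ℝ) +
      ((orb φ w n).filter fun v => sec (φ (of 1)) v = 1).card ≤ (orb φ w n).card := by
    exact_mod_cast huncut
  have hpos : (0 : ℝ) < (orb φ w n).card := by exact_mod_cast card_orb_pos n
  linarith [hcut 0, hcut 1]

end TreeAut

namespace TreeAut

open FreeGroup (of lift lift_apply_of)

variable {X : Type*} [Nonempty X] [Finite X]

theorem Deg.exists_pow_eq_one {g : treeAut X} (hg : Deg 0 g) : ∃ k : ℕ, 0 < k ∧ g ^ k = 1 := by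
  obtain ⟨n, hn⟩ := hg
  obtain ⟨k, hk, hpow⟩ := exists_pow_act_eq (X := X) n
  refine ⟨k, hk, eq_one_of_level n (hpow g) ?_⟩
  clear hk hpow
  induction k with
  | zero => simp
  | succ k ih =>
    intro v hv
    rw [pow_succ, sec_mul, ih _ (by simp [hv]), hn v hv, one_mul]

theorem not_injective_of_deg (e : ℕ) (φ : FreeGroup (Fin 2) →* treeAut X)
    (hφ : ∀ z, Deg e (φ z)) : ¬ Function.Injective φ := by
  induction e generalizing φ with
  | zero =>
    intro hinj
    obtain ⟨k, hk, h⟩ := (hφ (of 0)).exists_pow_eq_one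
    rw [← map_pow, ← map_one φ] at h
    simpa [hk.ne'] using hinj h
  | succ e ih =>
    intro hinj
    obtain ⟨w, hw⟩ := exists_germ_faithful hinj
    obtain ⟨p, hp, hpw⟩ := exists_ne_one_apply_eq (φ := φ.comp (conjEmbedding 0 1))
      (fun z => hφ _) w
    obtain ⟨q, hq, hqw⟩ := exists_ne_one_apply_eq (φ := φ.comp (conjEmbedding 1 0))
      (fun z => hφ _) w
    set ι : FreeGroup (Fin 2) →* FreeGroup (Fin 2) :=
      lift ![conjEmbedding 0 1 p, conjEmbedding 1 0 q] with hι
    have hιinj : Function.Injective ι := lift_conjEmbedding_injective hp hq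
    refine not_fixed_of_germ_faithful ih (φ.comp ι) (fun z => hφ _) w
      (fun z hz n => hw (ι z) (fun h => hz (hιinj (h.trans (map_one _).symm))) n) fun z => ?_
    have hle : ι.range ≤ (MulAction.stabilizer (Equiv.Perm (ℕ → X)) w).comap
        ((treeAut X).subtype.comp φ) := by
      rw [hι, FreeGroup.range_lift_eq_closure, Subgroup.closure_le]
      rintro _ ⟨i, rfl⟩
      fin_cases i
      · exact hpw
      · exact hqw
    exact hle ⟨z, rfl⟩

end TreeAut

/-- **Theorem `th:sidki`.** For every finite set `X` and every `d ≥ -1` the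
group `P_d(X)` contains no free non-abelian subgroup: there is no injective homomorphism
from the free group of rank 2 whose image lies in `P_d(X)`. -/
theorem stmt_14 (X : Type*) [Fintype X] [Nonempty X] (d : ℤ) (hd : -1 ≤ d)
    (φ : FreeGroup (Fin 2) →* Equiv.Perm (ℕ → X)) (hφ : ∀ z, MemP d (φ z)) :
    ¬ Function.Injective φ := by
  intro hinj
  let χ : FreeGroup (Fin 2) →* treeAut X := φ.codRestrict (treeAut X) fun z => (hφ z).1
  have hχ : ∀ z, ∃ e, TreeAut.Deg e (χ z) := fun z => TreeAut.exists_deg_of_memP (hφ z)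
  choose e he using fun i : Fin 2 => hχ (FreeGroup.of i)
  refine TreeAut.not_injective_of_deg (max (e 0) (e 1)) χ (fun z => ?_) ?_
  · induction z using FreeGroup.induction_on with
    | C1 => rw [map_one]; exact TreeAut.deg_one _
    | of i => exact (he i).mono (by fin_cases i <;> simp)
    | inv_of i h => rw [map_inv]; exact h.inv
    | mul a b ha hb => rw [map_mul]; exact ha.mul hb
  · exact fun a b h => hinj (congrArg Subtype.val h)
end

section
/- Let a and b be the automorphisms of the binary rooted tree {0,1}^* defined recursively by a(0v) = 1v, a(1v) = 0·a(v), b(0v) = 0·b(v), b(1v) = 1·a(v) for all v ∈ {0,1}^*. Then a ∈ P_0({0,1}), b ∈ P_1({0,1}), and the group G = ⟨a, b⟩ contains no free non-abelian subgroup. -/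
/-- Prepend a letter to an infinite sequence:  `scons x v = x·v`. -/
def scons {X : Type*} (x : X) (v : ℕ → X) : ℕ → X :=
  fun i => Nat.casesOn i x v

section FreeGroupFacts

/-- A central element of a free group on at least two generators is trivial. -/
theorem FreeGroup.eq_one_of_central {ι : Type*} [Nontrivial ι] (z : FreeGroup ι)
    (hz : ∀ i, Commute z (FreeGroup.of i)) : z = 1 := by
  classical
  by_contra hne
  have hword : z.toWord ≠ [] := by rwa [ne_eq, FreeGroup.toWord_eq_nil_iff]
  obtain ⟨⟨i, β⟩, L, hL⟩ := List.exists_cons_of_ne_nil hword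
  obtain ⟨j, hj⟩ := exists_ne i
  have hred : FreeGroup.IsReduced z.toWord := FreeGroup.isReduced_toWord
  obtain ⟨L', ⟨l, γ⟩, hL'⟩ : ∃ L' q, z.toWord = L' ++ [q] :=
    ⟨_, _, (List.dropLast_append_getLast hword).symm⟩
  -- multiply by the letter `j` with a sign that does not cancel the last letter of `z`
  have hcomm : FreeGroup.mk ((j, γ) :: z.toWord) = FreeGroup.mk (z.toWord ++ [(j, γ)]) := by
    have hc : Commute z (FreeGroup.mk [(j, γ)]) := by
      cases γ
      · have := (hz j).inv_right
        rwa [FreeGroup.of, FreeGroup.inv_mk] at this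
      · exact hz j
    have := hc.eq
    rw [← FreeGroup.mk_toWord (x := z), FreeGroup.mul_mk, FreeGroup.mul_mk] at this
    simpa using this.symm
  have h1 : FreeGroup.IsReduced ((j, γ) :: z.toWord) := by
    rw [hL] at hred ⊢
    refine List.isChain_cons_cons.2 ⟨fun h => absurd h hj, hred⟩
  have h2 : FreeGroup.IsReduced (z.toWord ++ [(j, γ)]) := by
    rw [hL'] at hred ⊢
    unfold FreeGroup.IsReduced at hred ⊢
    rw [List.isChain_append] at hred ⊢
    rw [List.isChain_append]
    refine ⟨hred, by simp, ?_⟩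
    intro x hx y hy
    simp at hx hy
    subst hx hy
    exact fun _ => rfl
  have := FreeGroup.reduce.sound hcomm
  rw [h1.reduce_eq, h2.reduce_eq, hL] at this
  simp at this
  exact hj this.1.1

theorem isCyclic_of_isFreeGroup_of_central {A : Type*} [Group A] [IsFreeGroup A] {z : A}
    (hz : ∀ x, Commute z x) (hne : z ≠ 1) : IsCyclic A := by
  let e := IsFreeGroup.toFreeGroup A
  have hez : e z ≠ 1 := by simpa using hne
  rcases subsingleton_or_nontrivial (IsFreeGroup.Generators A) with hs | hn
  · rcases isEmpty_or_nonempty (IsFreeGroup.Generators A) with he | ⟨⟨i⟩⟩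
    · exact absurd (Subsingleton.elim _ _) hez
    · let _ : Unique (IsFreeGroup.Generators A) := ⟨⟨i⟩, fun _ => Subsingleton.elim _ _⟩
      exact isCyclic_of_surjective e.symm e.symm.surjective
  · refine absurd (FreeGroup.eq_one_of_central (e z) fun i => ?_) hez
    have := (hz (e.symm (FreeGroup.of i))).map e
    simpa using this

variable {α : Type*}

/-- Elements commuting with a fixed nontrivial element of a free group are powers of a
common element. -/
theorem FreeGroup.exists_centralizer_generator {g : FreeGroup α} (hg : g ≠ 1) :
    ∃ c : FreeGroup α, ∀ x, Commute g x ↔ ∃ k : ℤ, c ^ k = x := by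
  have hcyc : IsCyclic (Subgroup.centralizer {g}) := by
    refine isCyclic_of_isFreeGroup_of_central
      (z := ⟨g, Subgroup.mem_centralizer_singleton_iff.2 rfl⟩) ?_ ?_
    · rintro ⟨x, hx⟩
      exact Subtype.ext (Subgroup.mem_centralizer_singleton_iff.1 hx).symm
    · simpa [Subtype.ext_iff] using hg
  obtain ⟨⟨c, hc⟩, hgen⟩ := hcyc.exists_generator
  refine ⟨c, fun x => ⟨fun hx => ?_, ?_⟩⟩
  · obtain ⟨k, hk⟩ := hgen ⟨x, Subgroup.mem_centralizer_singleton_iff.2 hx.eq.symm⟩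
    exact ⟨k, congrArg Subtype.val hk⟩
  · rintro ⟨k, rfl⟩
    exact Commute.zpow_right (Subgroup.mem_centralizer_singleton_iff.1 hc).symm k

theorem FreeGroup.commute_trans {x y z : FreeGroup α} (hy : y ≠ 1) (hxy : Commute y x)
    (hyz : Commute y z) : Commute x z := by
  obtain ⟨c, hc⟩ := FreeGroup.exists_centralizer_generator hy
  obtain ⟨k, rfl⟩ := (hc x).1 hxy
  obtain ⟨l, rfl⟩ := (hc z).1 hyz
  exact Commute.zpow_zpow_self c k l

theorem FreeGroup.commute_of_commute_pow {g t : FreeGroup α} {m : ℕ} (hm : m ≠ 0)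
    (h : Commute g (t ^ m)) : Commute g t := by
  have : (g * t * g⁻¹) ^ m = t ^ m := by
    rw [conj_pow, h.eq, mul_inv_cancel_right]
  have := pow_left_injective hm this
  exact mul_inv_eq_iff_eq_mul.1 this

theorem FreeGroup.commute_of_commute_zpow {g t : FreeGroup α} {k : ℤ} (hk : k ≠ 0)
    (h : Commute g (t ^ k)) : Commute g t := by
  refine FreeGroup.commute_of_commute_pow (m := k.natAbs) (by omega) ?_
  rcases Int.natAbs_eq k with h' | h'
  · rw [h', zpow_natCast] at h; exact h
  · rw [h', zpow_neg, zpow_natCast] at h; simpa using h.inv_right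

/-- If an element of a free group commutes with its conjugate by `h`, it commutes with `h`. -/
theorem FreeGroup.commute_of_commute_conj {g h : FreeGroup α}
    (hc : Commute g (h * g * h⁻¹)) : Commute g h := by
  rcases eq_or_ne g 1 with rfl | hg
  · exact Commute.one_left h
  obtain ⟨c, hcen⟩ := FreeGroup.exists_centralizer_generator hg
  obtain ⟨i, hi⟩ := (hcen g).1 (Commute.refl g)
  obtain ⟨j, hj⟩ := (hcen _).1 hc
  have hc1 : c ≠ 1 := by rintro rfl; simp at hi; exact hg hi.symm
  have hj0 : j ≠ 0 := by
    rintro rfl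
    simp only [zpow_zero] at hj
    exact hg (conj_eq_one_iff.1 hj.symm)
  have hgc : Commute g c := (hcen c).2 ⟨1, zpow_one c⟩
  have hconj : (h * c * h⁻¹) ^ i = c ^ j := by rw [conj_zpow, hi, hj]
  have hconj' : (h⁻¹ * c * h) ^ j = g := by
    have := conj_zpow (i := j) (a := h⁻¹) (b := c)
    rw [inv_inv] at this
    rw [this, hj]; group
  have h1 : Commute g (h * c * h⁻¹) := by
    have : Commute (h * c * h⁻¹) (c ^ j) := hconj ▸ (Commute.refl _).zpow_right i
    exact FreeGroup.commute_trans hc1 hgc.symm (FreeGroup.commute_of_commute_zpow hj0 this).symm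
  have h2 : Commute g (h⁻¹ * c * h) := by
    have : Commute (h⁻¹ * c * h) ((h⁻¹ * c * h) ^ j) := (Commute.refl _).zpow_right j
    rw [hconj'] at this
    exact this.symm
  obtain ⟨k, hk⟩ := (hcen _).1 h1
  obtain ⟨l, hl⟩ := (hcen _).1 h2
  have hpow : c ^ (k * l - 1) = 1 := by
    rw [zpow_sub_one, zpow_mul, hk, conj_zpow, hl]; group
  have hkl : k * l = 1 := by
    have := (IsMulTorsionFree.zpow_eq_one_iff_right hc1).1 hpow
    omega
  have hk1 : k * k = 1 := by
    rcases Int.eq_one_or_neg_one_of_mul_eq_one hkl with rfl | rfl <;> norm_num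
  have hsq : Commute c (h ^ 2) := by
    have : h * (h * c * h⁻¹) * h⁻¹ = c := by
      rw [← hk, ← conj_zpow, ← hk, ← zpow_mul, hk1, zpow_one]
    have h' : h ^ 2 * c = c * h ^ 2 := by
      calc h ^ 2 * c = (h * (h * c * h⁻¹) * h⁻¹) * h ^ 2 := by simp [pow_two, mul_assoc]
        _ = c * h ^ 2 := by rw [this]
    exact h'.symm
  have := FreeGroup.commute_of_commute_pow two_ne_zero hsq
  exact hi ▸ this.zpow_left i

theorem FreeGroup.le_norm_pow [DecidableEq α] {c : FreeGroup α} (hc : c ≠ 1) (n : ℕ) :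
    n ≤ (c ^ n).norm := by
  have hne : FreeGroup.reduceCyclically c.toWord ≠ [] := by
    intro h
    have := FreeGroup.reduceCyclically.conj_conjugator_reduceCyclically c.toWord
    apply hc
    rw [← FreeGroup.mk_toWord (x := c), ← this, h]
    simp [← FreeGroup.mul_mk, ← FreeGroup.inv_mk]
  have hpos := List.length_pos_iff.2 hne
  rw [FreeGroup.norm, FreeGroup.toWord_pow,
    FreeGroup.reduceCyclically.reduce_flatten_replicate FreeGroup.isReduced_toWord]
  split
  · omega
  · simp
    nlinarith

theorem FreeGroup.natAbs_le_norm_zpow [DecidableEq α] {c : FreeGroup α} (hc : c ≠ 1) (k : ℤ) :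
    k.natAbs ≤ (c ^ k).norm := by
  rcases Int.natAbs_eq k with h | h
  · conv_rhs => rw [h, zpow_natCast]
    exact FreeGroup.le_norm_pow hc _
  · conv_rhs => rw [h, zpow_neg, zpow_natCast, FreeGroup.norm_inv_eq]
    exact FreeGroup.le_norm_pow hc _

end FreeGroupFacts

section Sections

theorem scons_zero {X : Type*} (x : X) (v : ℕ → X) : scons x v 0 = x := rfl

theorem scons_succ {X : Type*} (x : X) (v : ℕ → X) (i : ℕ) : scons x v (i + 1) = v i := rfl

theorem exists_eq_scons {X : Type*} (u : ℕ → X) : ∃ x v, u = scons x v :=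
  ⟨u 0, fun i => u (i + 1), funext fun i => by cases i <;> rfl⟩

/-- Case distinction on the first letter of a binary sequence. -/
theorem eq_scons_zero_or_one (u : ℕ → Fin 2) : ∃ v, u = scons 0 v ∨ u = scons 1 v := by
  obtain ⟨x, v, rfl⟩ := exists_eq_scons u
  fin_cases x
  · exact ⟨v, Or.inl rfl⟩
  · exact ⟨v, Or.inr rfl⟩

/-- The sequences `u` and `w` agree on their first `n` letters. -/
def Agree {X : Type*} (n : ℕ) (u w : ℕ → X) : Prop := ∀ i, i < n → u i = w i

namespace Agree

variable {X : Type*} {n m : ℕ} {u v w : ℕ → X}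

theorem refl (n : ℕ) (u : ℕ → X) : Agree n u u := fun _ _ => rfl

theorem symm (h : Agree n u w) : Agree n w u := fun i hi => (h i hi).symm

theorem trans (h : Agree n u v) (h' : Agree n v w) : Agree n u w :=
  fun i hi => (h i hi).trans (h' i hi)

theorem mono (hmn : m ≤ n) (h : Agree n u w) : Agree m u w := fun i hi => h i (hi.trans_le hmn)

theorem succ_iff : Agree (n + 1) u w ↔ Agree n u w ∧ u n = w n := by
  refine ⟨fun h => ⟨h.mono n.le_succ, h n n.lt_succ_self⟩, fun h i hi => ?_⟩
  rcases Nat.lt_succ_iff_lt_or_eq.1 hi with hi | rfl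
  · exact h.1 i hi
  · exact h.2

theorem scons_iff {x y : X} : Agree (n + 1) (scons x u) (scons y w) ↔ x = y ∧ Agree n u w := by
  refine ⟨fun h => ⟨h 0 n.succ_pos, fun i hi => h (i + 1) (Nat.succ_lt_succ hi)⟩, ?_⟩
  rintro ⟨rfl, h⟩ (_ | i) hi
  · rfl
  · exact h i (Nat.lt_of_succ_lt_succ hi)

theorem zero (u w : ℕ → X) : Agree 0 u w := fun _ hi => absurd hi (Nat.not_lt_zero _)

end Agree

theorem IsTreeAut.agree_iff {X : Type*} {f : Equiv.Perm (ℕ → X)} (hf : IsTreeAut f) {n : ℕ}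
    {u w : ℕ → X} : Agree n (f u) (f w) ↔ Agree n u w := (hf n u w).symm

variable {X : Type*}

/-- Every element of `S` acts on each first letter with a section that again lies in `S`. -/
def ClosedUnderSections (S : Set (Equiv.Perm (ℕ → X))) : Prop :=
  ∀ f ∈ S, ∃ (σ : Equiv.Perm X) (s : X → Equiv.Perm (ℕ → X)),
    (∀ x, s x ∈ S) ∧ ∀ x v, f (scons x v) = scons (σ x) (s x v)

theorem ClosedUnderSections.isTreeAut {S : Set (Equiv.Perm (ℕ → X))}
    (hS : ClosedUnderSections S) {f : Equiv.Perm (ℕ → X)} (hf : f ∈ S) : IsTreeAut f := by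
  intro n
  change ∀ u w, Agree n u w ↔ Agree n (f u) (f w)
  induction n generalizing f with
  | zero => exact fun u w => ⟨fun _ => Agree.zero _ _, fun _ => Agree.zero _ _⟩
  | succ n ih =>
    intro u w
    obtain ⟨σ, s, hs, h⟩ := hS f hf
    obtain ⟨x, u, rfl⟩ := exists_eq_scons u
    obtain ⟨y, w, rfl⟩ := exists_eq_scons w
    rw [h, h, Agree.scons_iff, Agree.scons_iff, σ.apply_eq_iff_eq]
    refine and_congr_right ?_
    rintro rfl
    exact ih (hs x) u w

theorem wappend_succ {m : ℕ} (v : Fin (m + 1) → X) (u : ℕ → X) :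
    wappend v u = scons (v 0) (wappend (Fin.tail v) u) := by
  funext i
  cases i with
  | zero => simp [wappend, scons_zero]
  | succ i => simp [wappend, scons_succ, Fin.tail]

theorem ClosedUnderSections.restrictFun_mem {S : Set (Equiv.Perm (ℕ → X))}
    (hS : ClosedUnderSections S) {f : Equiv.Perm (ℕ → X)} (hf : f ∈ S) {m : ℕ}
    (v : Fin m → X) : ∃ g ∈ S, restrictFun f v = g := by
  induction m generalizing f with
  | zero =>
    refine ⟨f, hf, funext fun u => funext fun j => ?_⟩
    have : wappend v u = u := funext fun i => by simp [wappend]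
    simp [restrictFun, this]
  | succ m ih =>
    obtain ⟨σ, s, hs, h⟩ := hS f hf
    obtain ⟨g, hg, hfun⟩ := ih (hs (v 0)) (Fin.tail v)
    refine ⟨g, hg, hfun ▸ funext fun u => funext fun j => ?_⟩
    rw [restrictFun, wappend_succ, h, Nat.add_right_comm, scons_succ]
    rfl

theorem ClosedUnderSections.finiteState {S : Set (Equiv.Perm (ℕ → X))}
    (hS : ClosedUnderSections S) (hfin : S.Finite) {f : Equiv.Perm (ℕ → X)} (hf : f ∈ S) :
    FiniteState f := by
  refine hfin.subset ?_
  rintro _ ⟨m, v, rfl⟩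
  obtain ⟨g, hg, hfun⟩ := hS.restrictFun_mem hf v
  have hbij : Function.Bijective (restrictFun f v) := hfun ▸ g.bijective
  have : restrictPerm f v = g := by
    ext1 u
    rw [restrictPerm, dif_pos hbij]
    exact congrFun hfun u
  rwa [this]

theorem restrictTrivial_of_tail {f g : Equiv.Perm (ℕ → X)} {m : ℕ} {v : Fin (m + 1) → X} {y : X}
    (h : ∀ u, f (scons (v 0) u) = scons y (g u)) (hg : RestrictTrivial g (Fin.tail v)) :
    RestrictTrivial f v := by
  intro u hu i hi
  obtain ⟨x, u, rfl⟩ := exists_eq_scons u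
  obtain rfl : x = v 0 := hu 0
  obtain ⟨i, rfl⟩ : ∃ j, i = j + 1 := ⟨i - 1, by omega⟩
  rw [h, scons_succ, scons_succ]
  exact hg u (fun j => hu j.succ) i (by omega)

theorem thetaGrowth_succ_le {f g₀ g₁ : Equiv.Perm (ℕ → Fin 2)} {y₀ y₁ : Fin 2}
    (h₀ : ∀ u, f (scons 0 u) = scons y₀ (g₀ u)) (h₁ : ∀ u, f (scons 1 u) = scons y₁ (g₁ u))
    (n : ℕ) : thetaGrowth f (n + 1) ≤ thetaGrowth g₀ n + thetaGrowth g₁ n := by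
  have hsub : {v : Fin (n + 1) → Fin 2 | ¬ RestrictTrivial f v} ⊆
      Fin.cons (α := fun _ => Fin 2) 0 '' {v | ¬ RestrictTrivial g₀ v} ∪
        Fin.cons (α := fun _ => Fin 2) 1 '' {v | ¬ RestrictTrivial g₁ v} := by
    intro v hv
    rcases Fin.exists_fin_two.1 ⟨v 0, rfl⟩ with h | h
    · refine Or.inl ⟨Fin.tail v, fun ht => hv (restrictTrivial_of_tail (h ▸ h₀) ht), ?_⟩
      rw [← h, Fin.cons_self_tail]
    · refine Or.inr ⟨Fin.tail v, fun ht => hv (restrictTrivial_of_tail (h ▸ h₁) ht), ?_⟩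
      rw [← h, Fin.cons_self_tail]
  refine (Set.ncard_le_ncard hsub).trans ((Set.ncard_union_le _ _).trans ?_)
  exact add_le_add (Set.ncard_image_le) (Set.ncard_image_le)

theorem thetaGrowth_one (n : ℕ) : thetaGrowth (1 : Equiv.Perm (ℕ → X)) n = 0 := by
  have : {v : Fin n → X | ¬ RestrictTrivial 1 v} = ∅ :=
    Set.eq_empty_of_forall_notMem fun v hv => hv fun _ _ _ _ => rfl
  rw [thetaGrowth, this, Set.ncard_empty]

theorem thetaGrowth_zero_le (f : Equiv.Perm (ℕ → X)) : thetaGrowth f 0 ≤ 1 :=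
  Set.ncard_le_one_of_subsingleton _

end Sections

/-- The automorphisms `a`, `b` of the binary tree satisfy `a = σ(1, a)`, `b = (b, a)`. -/
structure TullioPair (a b : Equiv.Perm (ℕ → Fin 2)) : Prop where
  a_zero : ∀ v, a (scons 0 v) = scons 1 v
  a_one : ∀ v, a (scons 1 v) = scons 0 (a v)
  b_zero : ∀ v, b (scons 0 v) = scons 0 (b v)
  b_one : ∀ v, b (scons 1 v) = scons 1 (a v)

namespace TullioPair

variable {a b : Equiv.Perm (ℕ → Fin 2)}

theorem closedUnderSections (h : TullioPair a b) : ClosedUnderSections {1, a, b} := by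
  rintro f (rfl | rfl | rfl)
  · exact ⟨1, fun _ => 1, by simp, fun _ _ => rfl⟩
  · refine ⟨Equiv.swap 0 1, ![1, f], ?_, ?_⟩
    · simp [Fin.forall_fin_two]
    · simp [Fin.forall_fin_two, h.a_zero, h.a_one]
  · refine ⟨1, ![f, a], ?_, ?_⟩
    · simp [Fin.forall_fin_two]
    · simp [Fin.forall_fin_two, h.b_zero, h.b_one]

theorem thetaGrowth_a_le (h : TullioPair a b) (n : ℕ) : thetaGrowth a n ≤ 1 := by
  induction n with
  | zero => exact thetaGrowth_zero_le a
  | succ n ih =>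
    refine (thetaGrowth_succ_le (g₀ := 1) h.a_zero h.a_one n).trans ?_
    rwa [thetaGrowth_one, zero_add]

theorem thetaGrowth_b_le (h : TullioPair a b) (n : ℕ) : thetaGrowth b n ≤ n + 1 := by
  induction n with
  | zero => exact thetaGrowth_zero_le b
  | succ n ih =>
    exact (thetaGrowth_succ_le h.b_zero h.b_one n).trans (add_le_add ih (h.thetaGrowth_a_le n))

theorem isTreeAut_a (h : TullioPair a b) : IsTreeAut a :=
  h.closedUnderSections.isTreeAut (by simp)

theorem isTreeAut_b (h : TullioPair a b) : IsTreeAut b :=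
  h.closedUnderSections.isTreeAut (by simp)

theorem memP_a (h : TullioPair a b) : MemP 0 a :=
  ⟨h.isTreeAut_a, Or.inr ⟨le_rfl, h.closedUnderSections.finiteState (Set.toFinite _) (by simp), 1,
    by simp, fun n => by simpa using h.thetaGrowth_a_le n⟩⟩

theorem memP_b (h : TullioPair a b) : MemP 1 b :=
  ⟨h.isTreeAut_b, Or.inr ⟨zero_le_one,
    h.closedUnderSections.finiteState (Set.toFinite _) (by simp), Polynomial.X + 1,
    by exact_mod_cast Polynomial.natDegree_X_add_C (1 : ℕ) |>.le,
    fun n => by simpa using h.thetaGrowth_b_le n⟩⟩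

theorem isTreeAut_of_mem (h : TullioPair a b) {g : Equiv.Perm (ℕ → Fin 2)}
    (hg : g ∈ Subgroup.closure {a, b}) : IsTreeAut g := by
  have : Subgroup.closure {a, b} ≤ treeAut (Fin 2) := by
    rw [Subgroup.closure_le]
    rintro _ (rfl | rfl)
    · exact h.isTreeAut_a
    · exact h.isTreeAut_b
  exact this hg

end TullioPair

section Germs

theorem perm_apply_inv {α : Type*} (f : Equiv.Perm α) (x : α) : f (f⁻¹ x) = x :=
  f.apply_symm_apply x

theorem perm_inv_apply {α : Type*} (f : Equiv.Perm α) (x : α) : f⁻¹ (f x) = x :=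
  f.symm_apply_apply x

theorem zpow_scons {X : Type*} {f g : Equiv.Perm (ℕ → X)} {x : X}
    (h : ∀ v, f (scons x v) = scons x (g v)) (k : ℤ) (v : ℕ → X) :
    (f ^ k) (scons x v) = scons x ((g ^ k) v) := by
  induction k generalizing v with
  | zero => rfl
  | succ k ih => rw [zpow_add_one, zpow_add_one, Equiv.Perm.mul_apply, h, ih, Equiv.Perm.mul_apply]
  | pred k ih =>
    have hinv : f⁻¹ (scons x v) = scons x (g⁻¹ v) := by
      rw [Equiv.Perm.inv_eq_iff_eq, h, perm_apply_inv]
    rw [zpow_sub_one, zpow_sub_one, Equiv.Perm.mul_apply, hinv, ih, Equiv.Perm.mul_apply]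

/-- `f` and `g` have the same germ at `w`: they coincide on a neighbourhood of `w`. -/
def GermEq {X : Type*} (w : ℕ → X) (f g : Equiv.Perm (ℕ → X)) : Prop :=
  ∃ n, ∀ u, Agree n u w → f u = g u

namespace GermEq

variable {X : Type*} {w : ℕ → X} {f g f' g' : Equiv.Perm (ℕ → X)}

theorem refl (w : ℕ → X) (f : Equiv.Perm (ℕ → X)) : GermEq w f f := ⟨0, fun _ _ => rfl⟩

theorem apply_eq (h : GermEq w f g) : f w = g w := h.choose_spec w (Agree.refl _ w)

theorem symm (h : GermEq w f g) : GermEq w g f := h.imp fun _ hn u hu => (hn u hu).symm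

theorem trans (h : GermEq w f g) (h' : GermEq w g g') : GermEq w f g' := by
  obtain ⟨n, hn⟩ := h
  obtain ⟨m, hm⟩ := h'
  exact ⟨max n m, fun u hu =>
    (hn u (hu.mono (le_max_left n m))).trans (hm u (hu.mono (le_max_right n m)))⟩

theorem mul (hf : IsTreeAut f) (h : GermEq w f g) (h' : GermEq (f w) f' g') :
    GermEq w (f' * f) (g' * g) := by
  obtain ⟨n, hn⟩ := h
  obtain ⟨m, hm⟩ := h'
  refine ⟨max n m, fun u hu => ?_⟩
  rw [Equiv.Perm.mul_apply, Equiv.Perm.mul_apply, ← hn u (hu.mono (le_max_left n m))]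
  exact hm _ (hf.agree_iff.2 (hu.mono (le_max_right n m)))

end GermEq

end Germs

namespace TullioPair

variable {a b : Equiv.Perm (ℕ → Fin 2)}

theorem a_sq_scons (h : TullioPair a b) (x : Fin 2) (v : ℕ → Fin 2) :
    (a ^ 2) (scons x v) = scons x (a v) := by
  rw [pow_two, Equiv.Perm.mul_apply]
  fin_cases x
  · exact (congrArg a (h.a_zero v)).trans (h.a_one v)
  · exact (congrArg a (h.a_one v)).trans (h.a_zero (a v))

theorem a_zpow_two_mul_scons (h : TullioPair a b) (k : ℤ) (x : Fin 2) (v : ℕ → Fin 2) :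
    (a ^ (2 * k)) (scons x v) = scons x ((a ^ k) v) := by
  rw [zpow_mul]
  exact zpow_scons (h.a_sq_scons x) k v

/-- The adding machine `a` generates a freely acting cyclic group. -/
theorem eq_zero_of_a_zpow_apply_eq (h : TullioPair a b) {k : ℤ} {w : ℕ → Fin 2}
    (hk : (a ^ k) w = w) : k = 0 := by
  induction hn : k.natAbs using Nat.strong_induction_on generalizing k w with
  | _ n ih =>
  obtain ⟨x, v, rfl⟩ := exists_eq_scons w
  rcases Int.even_or_odd' k with ⟨j, rfl | rfl⟩
  · by_contra hne
    rw [h.a_zpow_two_mul_scons] at hk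
    have := ih j.natAbs (by omega) (funext fun i => congrFun hk (i + 1)) rfl
    omega
  · rw [add_comm, zpow_one_add, Equiv.Perm.mul_apply, h.a_zpow_two_mul_scons] at hk
    have h0 := congrFun hk 0
    exfalso
    fin_cases x
    · simp [h.a_zero, scons_zero] at h0
    · simp [h.a_one, scons_zero] at h0

theorem b_fixes_zero (h : TullioPair a b) : b (fun _ => 0) = fun _ => 0 := by
  have hz : (fun _ => 0 : ℕ → Fin 2) = scons 0 (fun _ => 0) := by
    funext i; cases i <;> rfl
  have hb : b (fun _ => 0) = scons 0 (b fun _ => 0) := by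
    conv_lhs => rw [hz]
    exact h.b_zero _
  funext i
  induction i with
  | zero => rw [hb]; rfl
  | succ i ih => rw [hb]; exact ih

theorem b_zpow_fixes_zero (h : TullioPair a b) (m : ℤ) : (b ^ m) (fun _ => 0) = fun _ => 0 := by
  have hfix : Function.IsFixedPt b (fun _ => 0) := h.b_fixes_zero
  exact Equiv.Perm.zpow_apply_eq_self_of_apply_eq_self hfix m

/-- Away from its fixed point `000…`, `b` acts locally as a power of `a`. -/
theorem germEq_b (h : TullioPair a b) {w : ℕ → Fin 2} (hw : w ≠ fun _ => 0) :
    ∃ k : ℤ, GermEq w b (a ^ k) := by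
  obtain ⟨l, hl⟩ := Function.ne_iff.1 hw
  induction l generalizing w with
  | zero =>
    refine ⟨2, 1, fun u hu => ?_⟩
    have hu0 : u 0 = 1 := by
      have := hu 0 zero_lt_one
      omega
    obtain ⟨x, v, rfl⟩ := exists_eq_scons u
    obtain rfl : x = 1 := hu0
    rw [h.b_one]
    exact (h.a_sq_scons 1 v).symm
  | succ l ih =>
    obtain ⟨z, rfl | rfl⟩ := eq_scons_zero_or_one w
    · have hz : z l ≠ 0 := hl
      obtain ⟨k, n, hn⟩ := ih (fun h0 => hz (congrFun h0 l)) hz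
      refine ⟨2 * k, n + 1, fun u hu => ?_⟩
      obtain ⟨x, v, rfl⟩ := exists_eq_scons u
      obtain ⟨rfl, hv⟩ := Agree.scons_iff.1 hu
      rw [h.b_zero, h.a_zpow_two_mul_scons, hn v hv]
    · refine ⟨2, 1, fun u hu => ?_⟩
      obtain ⟨x, v, rfl⟩ := exists_eq_scons u
      obtain ⟨rfl, -⟩ := Agree.scons_iff.1 hu
      rw [h.b_one]
      exact (h.a_sq_scons 1 v).symm

theorem germEq_b_inv (h : TullioPair a b) {w : ℕ → Fin 2} (hw : w ≠ fun _ => 0) :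
    ∃ k : ℤ, GermEq w b⁻¹ (a ^ k) := by
  have hne : b⁻¹ w ≠ fun _ => 0 := by
    rw [ne_eq, Equiv.Perm.inv_eq_iff_eq, h.b_fixes_zero]
    exact hw
  obtain ⟨k, n, hn⟩ := h.germEq_b hne
  refine ⟨-k, n, fun u hu => ?_⟩
  have := hn (b⁻¹ u) (h.isTreeAut_b.agree_iff.1 (by simpa using hu))
  rw [perm_apply_inv] at this
  rw [zpow_neg, Equiv.Perm.eq_inv_iff_eq, ← this]

theorem germEq_of_mem (h : TullioPair a b) {w : ℕ → Fin 2}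
    (hw : ∀ k : ℤ, (a ^ k) w ≠ fun _ => 0) {g : Equiv.Perm (ℕ → Fin 2)}
    (hg : g ∈ Subgroup.closure {a, b}) : ∃ k : ℤ, GermEq w g (a ^ k) := by
  have step : ∀ s y : Equiv.Perm (ℕ → Fin 2), IsTreeAut y →
      (∀ x : ℕ → Fin 2, (x ≠ fun _ => 0) → ∃ l : ℤ, GermEq x s (a ^ l)) →
      (∃ k : ℤ, GermEq w y (a ^ k)) → ∃ k : ℤ, GermEq w (s * y) (a ^ k) := by
    rintro s y hy hs ⟨k, hk⟩
    obtain ⟨l, hl⟩ := hs (y w) (hk.apply_eq ▸ hw k)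
    exact ⟨l + k, zpow_add a l k ▸ GermEq.mul hy hk hl⟩
  induction hg using Subgroup.closure_induction_left with
  | one => exact ⟨0, GermEq.refl _ _⟩
  | mul_left x hx y hy ih =>
    refine step x y (h.isTreeAut_of_mem hy) (fun z hz => ?_) ih
    rcases hx with rfl | rfl
    · exact ⟨1, zpow_one x ▸ GermEq.refl _ _⟩
    · exact h.germEq_b hz
  | inv_mul_cancel x hx y hy ih =>
    refine step x⁻¹ y (h.isTreeAut_of_mem hy) (fun z hz => ?_) ih
    rcases hx with rfl | rfl
    · exact ⟨-1, zpow_neg_one x ▸ GermEq.refl _ _⟩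
    · exact h.germEq_b_inv hz

theorem germEq_zero_of_mem (h : TullioPair a b) (j : ℤ) {g : Equiv.Perm (ℕ → Fin 2)}
    (hg : g ∈ Subgroup.closure {a, b}) :
    ∃ i m : ℤ, GermEq ((a ^ j) fun _ => 0) g (a ^ i * b ^ m * (a ^ j)⁻¹) := by
  have happ : ∀ i m : ℤ, (a ^ i * b ^ m * (a ^ j)⁻¹) ((a ^ j) fun _ => 0) =
      (a ^ i) fun _ => 0 := by
    intro i m
    rw [Equiv.Perm.mul_apply, Equiv.Perm.mul_apply, perm_inv_apply,
      h.b_zpow_fixes_zero]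
  have step : ∀ (y : Equiv.Perm (ℕ → Fin 2)) (ε : ℤ), IsTreeAut y →
      (∀ x : ℕ → Fin 2, (x ≠ fun _ => 0) → ∃ l : ℤ, GermEq x (b ^ ε) (a ^ l)) →
      (∃ i m : ℤ, GermEq ((a ^ j) fun _ => 0) y (a ^ i * b ^ m * (a ^ j)⁻¹)) →
      ∃ i m : ℤ, GermEq ((a ^ j) fun _ => 0) (b ^ ε * y) (a ^ i * b ^ m * (a ^ j)⁻¹) := by
    rintro y ε hy hs ⟨i, m, hk⟩
    rcases eq_or_ne i 0 with rfl | hi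
    · refine ⟨0, ε + m, ?_⟩
      have := GermEq.mul hy hk (GermEq.refl _ (b ^ ε))
      simpa [zpow_add, mul_assoc] using this
    · have hne : y ((a ^ j) fun _ => 0) ≠ fun _ => 0 := by
        rw [hk.apply_eq, happ]
        exact fun h0 => hi (h.eq_zero_of_a_zpow_apply_eq h0)
      obtain ⟨l, hl⟩ := hs _ hne
      refine ⟨l + i, m, ?_⟩
      have := GermEq.mul hy hk hl
      simpa [zpow_add, mul_assoc] using this
  have step_a : ∀ (y : Equiv.Perm (ℕ → Fin 2)) (ε : ℤ), IsTreeAut y →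
      (∃ i m : ℤ, GermEq ((a ^ j) fun _ => 0) y (a ^ i * b ^ m * (a ^ j)⁻¹)) →
      ∃ i m : ℤ, GermEq ((a ^ j) fun _ => 0) (a ^ ε * y) (a ^ i * b ^ m * (a ^ j)⁻¹) := by
    rintro y ε hy ⟨i, m, hk⟩
    refine ⟨ε + i, m, ?_⟩
    have := GermEq.mul hy hk (GermEq.refl _ (a ^ ε))
    simpa [zpow_add, mul_assoc] using this
  induction hg using Subgroup.closure_induction_left with
  | one => exact ⟨j, 0, by simpa using GermEq.refl _ _⟩
  | mul_left x hx y hy ih =>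
    rw [← zpow_one x]
    rcases hx with rfl | rfl
    · exact step_a y 1 (h.isTreeAut_of_mem hy) ih
    · exact step y 1 (h.isTreeAut_of_mem hy) (fun z hz => by simpa using h.germEq_b hz) ih
  | inv_mul_cancel x hx y hy ih =>
    rw [← zpow_neg_one x]
    rcases hx with rfl | rfl
    · exact step_a y (-1) (h.isTreeAut_of_mem hy) ih
    · exact step y (-1) (h.isTreeAut_of_mem hy) (fun z hz => by simpa using h.germEq_b_inv hz) ih

/-- The group of germs of the stabilizer of any point is cyclic. -/
theorem exists_germ_generator (h : TullioPair a b) (w : ℕ → Fin 2) :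
    ∃ c : Equiv.Perm (ℕ → Fin 2), ∀ g ∈ Subgroup.closure {a, b}, g w = w →
      ∃ m : ℤ, GermEq w g (c ^ m) := by
  by_cases hw : ∀ k : ℤ, (a ^ k) w ≠ fun _ => 0
  · refine ⟨1, fun g hg hfix => ⟨0, ?_⟩⟩
    obtain ⟨k, hk⟩ := h.germEq_of_mem hw hg
    obtain rfl := h.eq_zero_of_a_zpow_apply_eq (hk.apply_eq ▸ hfix)
    simpa using hk
  · push Not at hw
    obtain ⟨k, hk⟩ := hw
    obtain ⟨j, rfl⟩ : ∃ j : ℤ, w = (a ^ j) fun _ => 0 :=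
      ⟨-k, by rw [zpow_neg, Equiv.Perm.eq_inv_iff_eq, hk]⟩
    refine ⟨a ^ j * b * (a ^ j)⁻¹, fun g hg hfix => ?_⟩
    obtain ⟨i, m, hgm⟩ := h.germEq_zero_of_mem j hg
    have hij : (a ^ i) (fun _ => 0) = (a ^ j) fun _ => 0 := by
      rw [hgm.apply_eq] at hfix
      simpa only [Equiv.Perm.mul_apply, perm_inv_apply, h.b_zpow_fixes_zero] using hfix
    have : i = j := by
      have h0 : (a ^ (-j + i)) (fun _ => 0) = fun _ => 0 := by
        rw [zpow_add, Equiv.Perm.mul_apply, hij, zpow_neg, perm_inv_apply]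
      have := h.eq_zero_of_a_zpow_apply_eq h0
      omega
    subst this
    exact ⟨m, conj_zpow (i := m) (a := a ^ i) (b := b) ▸ hgm⟩

/-- Two elements of the stabilizer of a point commute on a neighbourhood of that point. -/
theorem germEq_mul_comm (h : TullioPair a b) {w : ℕ → Fin 2} {g₁ g₂ : Equiv.Perm (ℕ → Fin 2)}
    (h₁ : g₁ ∈ Subgroup.closure {a, b}) (h₂ : g₂ ∈ Subgroup.closure {a, b})
    (hw₁ : g₁ w = w) (hw₂ : g₂ w = w) : GermEq w (g₁ * g₂) (g₂ * g₁) := by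
  obtain ⟨c, hc⟩ := h.exists_germ_generator w
  obtain ⟨m₁, hm₁⟩ := hc g₁ h₁ hw₁
  obtain ⟨m₂, hm₂⟩ := hc g₂ h₂ hw₂
  have h12 : GermEq w (g₁ * g₂) (c ^ m₁ * c ^ m₂) :=
    GermEq.mul (h.isTreeAut_of_mem h₂) hm₂ (hw₂.symm ▸ hm₁)
  have h21 : GermEq w (g₂ * g₁) (c ^ m₂ * c ^ m₁) :=
    GermEq.mul (h.isTreeAut_of_mem h₁) hm₁ (hw₁.symm ▸ hm₂)
  rw [(Commute.zpow_zpow_self c m₁ m₂).eq] at h12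
  exact h12.trans h21.symm

end TullioPair

section Growth

/-- `Reach a b x p n y`: a path of length `n` in the Schreier graph of `⟨a, b⟩`, with exactly `p`
edges labelled by `a` or `a⁻¹`, leads from `x` to `y`. -/
inductive Reach {α : Type*} (a b : Equiv.Perm α) (x : α) : ℕ → ℕ → α → Prop
  | start : Reach a b x 0 0 x
  | a_step {p n : ℕ} {y : α} : Reach a b x p n y → Reach a b x (p + 1) (n + 1) (a y)
  | a_inv_step {p n : ℕ} {y : α} : Reach a b x p n y → Reach a b x (p + 1) (n + 1) (a⁻¹ y)
  | b_step {p n : ℕ} {y : α} : Reach a b x p n y → Reach a b x p (n + 1) (b y)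
  | b_inv_step {p n : ℕ} {y : α} : Reach a b x p n y → Reach a b x p (n + 1) (b⁻¹ y)

/-- `y` lies in the ball of radius `n` about `x` in the Schreier graph of `⟨a, b⟩`. -/
def InBall {α : Type*} (a b : Equiv.Perm α) (x : α) (n : ℕ) (y : α) : Prop :=
  ∃ p m, m ≤ n ∧ Reach a b x p m y

variable {α : Type*} {a b : Equiv.Perm α} {x y z : α} {m n p : ℕ}

theorem Reach.trans {q : ℕ} (h : Reach a b x p m y) (h' : Reach a b y q n z) :
    Reach a b x (p + q) (m + n) z := by
  induction h' with
  | start => exact h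
  | a_step _ ih => exact ih.a_step
  | a_inv_step _ ih => exact ih.a_inv_step
  | b_step _ ih => exact ih.b_step
  | b_inv_step _ ih => exact ih.b_inv_step

namespace InBall

theorem refl (x : α) (n : ℕ) : InBall a b x n x := ⟨0, 0, n.zero_le, .start⟩

theorem mono (hmn : m ≤ n) (h : InBall a b x m y) : InBall a b x n y := by
  obtain ⟨p, k, hk, hr⟩ := h
  exact ⟨p, k, hk.trans hmn, hr⟩

theorem trans (h : InBall a b x m y) (h' : InBall a b y n z) : InBall a b x (m + n) z := by
  obtain ⟨p, k, hk, hr⟩ := h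
  obtain ⟨q, l, hl, hr'⟩ := h'
  exact ⟨p + q, k + l, add_le_add hk hl, hr.trans hr'⟩

theorem a_step (h : InBall a b x n y) : InBall a b x (n + 1) (a y) :=
  h.trans ⟨1, 1, le_rfl, Reach.start.a_step⟩

theorem a_inv_step (h : InBall a b x n y) : InBall a b x (n + 1) (a⁻¹ y) :=
  h.trans ⟨1, 1, le_rfl, Reach.start.a_inv_step⟩

theorem b_step (h : InBall a b x n y) : InBall a b x (n + 1) (b y) :=
  h.trans ⟨0, 1, le_rfl, Reach.start.b_step⟩

theorem b_inv_step (h : InBall a b x n y) : InBall a b x (n + 1) (b⁻¹ y) :=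
  h.trans ⟨0, 1, le_rfl, Reach.start.b_inv_step⟩

theorem eq_of_zero (h : InBall a b x 0 y) : y = x := by
  obtain ⟨p, m, hm, hr⟩ := h
  cases hr with
  | start => rfl
  | _ => omega

end InBall

theorem exists_inBall_of_mem_closure {g : Equiv.Perm α} (hg : g ∈ Subgroup.closure {a, b}) :
    ∃ n, ∀ x, InBall a b x n (g x) := by
  induction hg using Subgroup.closure_induction_left with
  | one => exact ⟨0, fun x => InBall.refl x 0⟩
  | mul_left s hs y _ ih =>
    obtain ⟨n, hn⟩ := ih
    refine ⟨n + 1, fun x => ?_⟩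
    rcases hs with rfl | rfl
    · exact (hn x).a_step
    · exact (hn x).b_step
  | inv_mul_cancel s hs y _ ih =>
    obtain ⟨n, hn⟩ := ih
    refine ⟨n + 1, fun x => ?_⟩
    rcases hs with rfl | rfl
    · exact (hn x).a_inv_step
    · exact (hn x).b_inv_step

open scoped Classical in
/-- The points `b ^ k₁ s₁ ⋯ b ^ k_q s_q x` with `|k_i| ≤ N` and `s_i ∈ {1, a, a⁻¹}`. -/
noncomputable def sparsePoints (a b : Equiv.Perm α) (x : α) (N : ℕ) : ℕ → Finset α
  | 0 => {x}
  | q + 1 => (Finset.Icc (-N : ℤ) N ×ˢ ({1, a, a⁻¹} : Finset (Equiv.Perm α)) ×ˢ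
      sparsePoints a b x N q).image fun t => (b ^ t.1) (t.2.1 t.2.2)

theorem mem_sparsePoints_succ {N q : ℕ} : y ∈ sparsePoints a b x N (q + 1) ↔
    ∃ k : ℤ, ∃ s : Equiv.Perm α, ∃ z, (-N ≤ k ∧ k ≤ N) ∧ (s = 1 ∨ s = a ∨ s = a⁻¹) ∧
      z ∈ sparsePoints a b x N q ∧ (b ^ k) (s z) = y := by
  simp [sparsePoints, and_assoc]

theorem card_sparsePoints_le (N q : ℕ) :
    (sparsePoints a b x N q).card ≤ (3 * (2 * N + 1)) ^ q := by
  classical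
  induction q with
  | zero => simp [sparsePoints]
  | succ q ih =>
    refine Finset.card_image_le.trans ?_
    rw [Finset.card_product, Finset.card_product, Int.card_Icc, pow_succ']
    have h3 : ({1, a, a⁻¹} : Finset (Equiv.Perm α)).card ≤ 3 := Finset.card_le_three
    have hN : ((N : ℤ) + 1 - -N).toNat = 2 * N + 1 := by omega
    rw [hN]
    calc _ ≤ (2 * N + 1) * (3 * (3 * (2 * N + 1)) ^ q) := by gcongr
      _ = 3 * (2 * N + 1) * (3 * (2 * N + 1)) ^ q := by ring

theorem sparsePoints_mono {M N : ℕ} (hMN : M ≤ N) (q : ℕ) :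
    sparsePoints a b x M q ⊆ sparsePoints a b x N q := by
  induction q with
  | zero => exact subset_rfl
  | succ q ih =>
    intro y hy
    rw [mem_sparsePoints_succ] at hy ⊢
    obtain ⟨k, s, z, hk, hs, hz, rfl⟩ := hy
    exact ⟨k, s, z, by omega, hs, ih hz, rfl⟩

theorem sparsePoints_subset_succ (N q : ℕ) :
    sparsePoints a b x N q ⊆ sparsePoints a b x N (q + 1) := fun y hy =>
  mem_sparsePoints_succ.2 ⟨0, 1, y, by omega, Or.inl rfl, hy, rfl⟩

theorem Reach.mem_sparsePoints (h : Reach a b x p n y) :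
    y ∈ sparsePoints a b x n (p + 1) := by
  have a_case : ∀ {p n : ℕ} {y : α} (s : Equiv.Perm α), (s = 1 ∨ s = a ∨ s = a⁻¹) →
      y ∈ sparsePoints a b x n (p + 1) → s y ∈ sparsePoints a b x (n + 1) (p + 1 + 1) :=
    fun {p n y} s hs hy => mem_sparsePoints_succ.2
      ⟨0, s, y, by omega, hs, sparsePoints_mono n.le_succ _ hy, rfl⟩
  have b_case : ∀ {p n : ℕ} {y : α} (ε : ℤ), (-1 ≤ ε ∧ ε ≤ 1) →
      y ∈ sparsePoints a b x n (p + 1) → (b ^ ε) y ∈ sparsePoints a b x (n + 1) (p + 1) := by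
    intro p n y ε hε hy
    obtain ⟨k, s, z, hk, hs, hz, rfl⟩ := mem_sparsePoints_succ.1 hy
    refine mem_sparsePoints_succ.2
      ⟨ε + k, s, z, by push_cast; omega, hs, sparsePoints_mono n.le_succ _ hz, ?_⟩
    rw [zpow_add, Equiv.Perm.mul_apply]
  induction h with
  | start => exact sparsePoints_subset_succ _ _ (by simp [sparsePoints])
  | a_step _ ih => exact a_case a (by simp) ih
  | a_inv_step _ ih => exact a_case a⁻¹ (by simp) ih
  | b_step _ ih => simpa using b_case 1 (by omega) ih
  | b_inv_step _ ih => simpa using b_case (-1) (by omega) ih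

theorem sparsePoints_mono_right (N : ℕ) {q r : ℕ} (hqr : q ≤ r) :
    sparsePoints a b x N q ⊆ sparsePoints a b x N r :=
  monotone_nat_of_le_succ (f := sparsePoints a b x N) (sparsePoints_subset_succ N) hqr

end Growth

namespace TullioPair

variable {a b : Equiv.Perm (ℕ → Fin 2)}

theorem a_inv_one (h : TullioPair a b) (v : ℕ → Fin 2) : a⁻¹ (scons 1 v) = scons 0 v := by
  rw [Equiv.Perm.inv_eq_iff_eq, h.a_zero]

theorem a_inv_zero (h : TullioPair a b) (v : ℕ → Fin 2) :
    a⁻¹ (scons 0 v) = scons 1 (a⁻¹ v) := by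
  rw [Equiv.Perm.inv_eq_iff_eq, h.a_one, perm_apply_inv]

theorem b_inv_zero (h : TullioPair a b) (v : ℕ → Fin 2) :
    b⁻¹ (scons 0 v) = scons 0 (b⁻¹ v) := by
  rw [Equiv.Perm.inv_eq_iff_eq, h.b_zero, perm_apply_inv]

theorem b_inv_one (h : TullioPair a b) (v : ℕ → Fin 2) :
    b⁻¹ (scons 1 v) = scons 1 (a⁻¹ v) := by
  rw [Equiv.Perm.inv_eq_iff_eq, h.b_one, perm_apply_inv]

/-- Deleting the first letter turns a path with `p` edges labelled by `a` or `a⁻¹` into a path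
that is shorter by about `p / 2`. At points starting with `1` the bound must hold at both points
to which the next edge labelled by `a` or `a⁻¹` may lead. -/
theorem reach_scons (h : TullioPair a b) {x : Fin 2} {v u : ℕ → Fin 2} {p n : ℕ}
    (hr : Reach a b (scons x v) p n u) :
    (∃ z k, u = scons 0 z ∧ 2 * k + p ≤ 2 * n + 1 ∧ InBall a b v k z) ∨
      (∃ z k, u = scons 1 z ∧ 2 * k + p ≤ 2 * n + 2 ∧ InBall a b v k z ∧
        InBall a b v k (a z)) := by
  induction hr with
  | start =>
    rcases Fin.exists_fin_two.1 ⟨x, rfl⟩ with rfl | rfl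
    · exact Or.inl ⟨v, 0, rfl, by omega, InBall.refl v 0⟩
    · exact Or.inr ⟨v, 1, rfl, by omega, InBall.refl v 1, (InBall.refl v 0).a_step⟩
  | a_step _ ih =>
    rcases ih with ⟨z, k, rfl, hk, hz⟩ | ⟨z, k, rfl, hk, hz, haz⟩
    · exact Or.inr ⟨z, k + 1, h.a_zero z, by omega, hz.mono k.le_succ, hz.a_step⟩
    · exact Or.inl ⟨a z, k, h.a_one z, by omega, haz⟩
  | a_inv_step _ ih =>
    rcases ih with ⟨z, k, rfl, hk, hz⟩ | ⟨z, k, rfl, hk, hz, haz⟩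
    · refine Or.inr ⟨a⁻¹ z, k + 1, h.a_inv_zero z, by omega, hz.a_inv_step, ?_⟩
      rw [perm_apply_inv]
      exact hz.mono k.le_succ
    · exact Or.inl ⟨z, k, h.a_inv_one z, by omega, hz⟩
  | b_step _ ih =>
    rcases ih with ⟨z, k, rfl, hk, hz⟩ | ⟨z, k, rfl, hk, hz, haz⟩
    · exact Or.inl ⟨b z, k + 1, h.b_zero z, by omega, hz.b_step⟩
    · exact Or.inr ⟨a z, k + 1, h.b_one z, by omega, haz.mono k.le_succ, haz.a_step⟩
  | b_inv_step _ ih =>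
    rcases ih with ⟨z, k, rfl, hk, hz⟩ | ⟨z, k, rfl, hk, hz, haz⟩
    · exact Or.inl ⟨b⁻¹ z, k + 1, h.b_inv_zero z, by omega, hz.b_inv_step⟩
    · refine Or.inr ⟨a⁻¹ z, k + 1, h.b_inv_one z, by omega, hz.a_inv_step, ?_⟩
      rw [perm_apply_inv]
      exact hz.mono k.le_succ

theorem exists_ball_cover (h : TullioPair a b) (s N j : ℕ) (hj : j * s ≤ N) (w : ℕ → Fin 2) :
    ∃ S : Finset (ℕ → Fin 2), (∀ y, InBall a b w (j * s) y → y ∈ S) ∧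
      S.card + (3 * (2 * N + 1)) ^ (2 * s + 2) ≤ 2 ^ j * (1 + (3 * (2 * N + 1)) ^ (2 * s + 2)) := by
  classical
  induction j generalizing w with
  | zero =>
    refine ⟨{w}, fun y hy => ?_, by simp⟩
    rw [zero_mul] at hy
    exact Finset.mem_singleton.2 hy.eq_of_zero
  | succ j ih =>
    rw [Nat.succ_mul] at hj ⊢
    obtain ⟨x, v, rfl⟩ := exists_eq_scons w
    obtain ⟨S, hS, hcard⟩ := ih (by omega) v
    refine ⟨sparsePoints a b (scons x v) N (2 * s + 2) ∪ (S.image (scons 0) ∪ S.image (scons 1)),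
      ?_, ?_⟩
    · rintro y ⟨p, m, hm, hr⟩
      rw [Finset.mem_union, Finset.mem_union, Finset.mem_image, Finset.mem_image]
      by_cases hp : p ≤ 2 * s + 1
      · exact Or.inl (sparsePoints_mono_right N (by omega)
          (sparsePoints_mono (hm.trans hj) _ hr.mem_sparsePoints))
      · right
        rcases h.reach_scons hr with ⟨z, k, rfl, hk, hz⟩ | ⟨z, k, rfl, hk, hz, -⟩
        · exact Or.inl ⟨z, hS z (hz.mono (by omega)), rfl⟩
        · exact Or.inr ⟨z, hS z (hz.mono (by omega)), rfl⟩
    · have h1 := card_sparsePoints_le (a := a) (b := b) (x := scons x v) N (2 * s + 2)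
      have h2 := Finset.card_union_le (sparsePoints a b (scons x v) N (2 * s + 2))
        (S.image (scons 0) ∪ S.image (scons 1))
      have h3 := Finset.card_union_le (S.image (scons (0 : Fin 2))) (S.image (scons 1))
      have h4 : (S.image (scons (0 : Fin 2))).card ≤ S.card := Finset.card_image_le
      have h5 : (S.image (scons (1 : Fin 2))).card ≤ S.card := Finset.card_image_le
      rw [pow_succ 2 j, mul_comm (2 ^ j) 2, mul_assoc]
      omega

/-- Balls in the Schreier graphs of `⟨a, b⟩` have subexponential size. -/
theorem exists_ball_cover_sq (h : TullioPair a b) (s : ℕ) (w : ℕ → Fin 2) :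
    ∃ S : Finset (ℕ → Fin 2), (∀ y, InBall a b w (s * s) y → y ∈ S) ∧
      S.card ≤ 2 ^ (s + 1) * (3 * (2 * (s * s) + 1)) ^ (2 * s + 2) := by
  obtain ⟨S, hS, hcard⟩ := h.exists_ball_cover s (s * s) s le_rfl w
  refine ⟨S, hS, (Nat.le_add_right _ _).trans (hcard.trans ?_)⟩
  have : 1 ≤ (3 * (2 * (s * s) + 1)) ^ (2 * s + 2) := Nat.one_le_pow _ _ (by omega)
  rw [pow_succ 2 s, mul_assoc]
  gcongr
  omega

end TullioPair

/-- With `s = 2 ^ (c + r)` and `n = 2 ^ (c + 2 * r)`, one has `s * s = 2 ^ c * n`, and the bound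
on the size of the ball of radius `s * s` is much smaller than `2 ^ n` if `r` is large. -/
theorem ball_bound_lt_two_pow (c r : ℕ) (hr : c + 8 ≤ r) :
    (4 * 2 ^ (c + 2 * r) + 1) * (2 ^ (2 ^ (c + r) + 1) *
      (3 * (2 * (2 ^ (c + r) * 2 ^ (c + r)) + 1)) ^ (2 * 2 ^ (c + r) + 2)) <
        2 ^ 2 ^ (c + 2 * r) := by
  have hlin : 15 * r + 17 < 2 ^ r := by
    have h8 : 8 ≤ r := by omega
    clear hr
    induction r, h8 using Nat.le_induction with
    | base => norm_num
    | succ r _ ih => rw [pow_succ]; omega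
  set s := 2 ^ (c + r) with hs
  have hs2 : 2 ≤ s := by
    calc 2 = 2 ^ 1 := rfl
      _ ≤ s := Nat.pow_le_pow_right two_pos (by omega)
  have h1 : 4 * 2 ^ (c + 2 * r) + 1 ≤ 2 ^ (c + 2 * r + 3) := by
    have := Nat.one_le_two_pow (n := c + 2 * r)
    rw [pow_add _ _ 3]; omega
  have h2 : 3 * (2 * (s * s) + 1) ≤ 2 ^ (2 * (c + r) + 4) := by
    have : 2 ^ (2 * (c + r) + 4) = 16 * (s * s) := by rw [hs]; ring
    nlinarith
  have h3 : 2 ^ (c + 2 * r) = s * 2 ^ r := by rw [hs]; ring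
  calc _ ≤ 2 ^ (c + 2 * r + 3) * (2 ^ (s + 1) * (2 ^ (2 * (c + r) + 4)) ^ (2 * s + 2)) := by
        gcongr
    _ = 2 ^ (c + 2 * r + 3 + (s + 1 + (2 * (c + r) + 4) * (2 * s + 2))) := by
        rw [← pow_mul, ← pow_add, ← pow_add]
    _ < 2 ^ 2 ^ (c + 2 * r) := by
        refine Nat.pow_lt_pow_right one_lt_two ?_
        rw [h3]
        have hb : c + 2 * r + 3 + (s + 1 + (2 * (c + r) + 4) * (2 * s + 2)) ≤
            3 * r + 3 + (s + 1 + (4 * r + 4) * (3 * s)) := by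
          gcongr ?_ + 3 + (s + 1 + ?_ * ?_) <;> omega
        have hc : 3 * r + 3 + (s + 1 + (4 * r + 4) * (3 * s)) ≤ s * (15 * r + 17) := by nlinarith
        exact (hb.trans hc).trans_lt (Nat.mul_lt_mul_of_pos_left hlin (by omega))

section PositiveWords

variable {α : Type*}

/-- The element of the free group spelled by a word in the generators. -/
def positiveWord (l : List α) : FreeGroup α := FreeGroup.mk (l.map fun i => (i, true))

theorem positiveWord_cons (i : α) (l : List α) :
    positiveWord (i :: l) = FreeGroup.of i * positiveWord l := rfl

theorem positiveWord_injective : Function.Injective (positiveWord (α := α)) := by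
  classical
  have hred : ∀ l : List α, FreeGroup.IsReduced (l.map fun i => (i, true)) := by
    intro l
    refine List.Pairwise.isChain ?_
    rw [List.pairwise_map]
    exact List.pairwise_of_forall fun _ _ _ => rfl
  intro l l' hll
  have := congrArg FreeGroup.toWord hll
  rw [positiveWord, positiveWord, FreeGroup.toWord_mk, FreeGroup.toWord_mk, (hred l).reduce_eq,
    (hred l').reduce_eq] at this
  exact List.map_injective_iff.2 (fun _ _ hij => congrArg Prod.fst hij) this

theorem norm_positiveWord_le [DecidableEq α] (l : List α) :
    (positiveWord l).norm ≤ l.length :=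
  FreeGroup.norm_mk_le.trans (List.length_map _).le

end PositiveWords

/-- A subgroup of a free group all of whose elements commute is contained in a cyclic group. -/
theorem FreeGroup.exists_zpow_eq_of_commute {α : Type*} [Nonempty α] {H : Subgroup (FreeGroup α)}
    (hH : ∀ x ∈ H, ∀ y ∈ H, Commute x y) : ∃ c ≠ 1, ∀ x ∈ H, ∃ k : ℤ, c ^ k = x := by
  by_cases htriv : ∀ x ∈ H, x = 1
  · obtain ⟨i⟩ := ‹Nonempty α›
    exact ⟨of i, of_ne_one i, fun x hx => ⟨0, by rw [htriv x hx, zpow_zero]⟩⟩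
  · push Not at htriv
    obtain ⟨g, hgH, hg⟩ := htriv
    obtain ⟨c, hc⟩ := exists_centralizer_generator hg
    refine ⟨c, ?_, fun x hx => (hc x).1 (hH g hgH x hx)⟩
    rintro rfl
    obtain ⟨k, hk⟩ := (hc g).1 (Commute.refl g)
    exact hg (by rw [← hk, one_zpow])

/-- The elements `x⁻¹ y` for positive words `x`, `y` of length `n` include at most `4 n + 1` powers
of a given nontrivial element. -/
theorem card_le_of_mul_mem_zpowers {ι : Type*} [DecidableEq ι] {n : ℕ} {c : FreeGroup ι}
    (hc : c ≠ 1) (T : Finset (Fin n → ι))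
    (hT : ∀ l ∈ T, ∀ l' ∈ T, ∃ k : ℤ,
      c ^ k = (positiveWord (List.ofFn l))⁻¹ * positiveWord (List.ofFn l')) :
    T.card ≤ 4 * n + 1 := by
  rcases T.eq_empty_or_nonempty with rfl | ⟨l₀, hl₀⟩
  · simp
  choose! k hk using hT l₀ hl₀
  calc T.card ≤ (Finset.Icc (-(2 * n) : ℤ) (2 * n)).card := by
        refine Finset.card_le_card_of_injOn k (fun l hl => ?_) fun l hl l' hl' hkl => ?_
        · have h1 := FreeGroup.natAbs_le_norm_zpow hc (k l)
          rw [hk l hl] at h1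
          have h2 := FreeGroup.norm_mul_le (positiveWord (List.ofFn l₀))⁻¹
            (positiveWord (List.ofFn l))
          rw [FreeGroup.norm_inv_eq] at h2
          have h3 := norm_positiveWord_le (List.ofFn l₀)
          have h4 := norm_positiveWord_le (List.ofFn l)
          rw [List.length_ofFn] at h3 h4
          rw [Finset.mem_coe, Finset.mem_Icc]
          omega
        · have h1 := hk l hl
          rw [hkl, hk l' hl', mul_right_inj] at h1
          exact (List.ofFn_injective (positiveWord_injective h1)).symm
    _ = 4 * n + 1 := by rw [Int.card_Icc]; omega

/-- Some nontrivial element of the free group acts trivially on the cylinder of sequences sharing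
their first `n` letters with `w`. -/
def FixesCylinder {ι X : Type*} (φ : FreeGroup ι →* Equiv.Perm (ℕ → X)) (n : ℕ) (w : ℕ → X) :
    Prop :=
  ∃ f ≠ 1, ∀ u, Agree n u w → φ f u = u

section Cylinders

variable {ι X : Type*} {φ : FreeGroup ι →* Equiv.Perm (ℕ → X)} {n : ℕ} {w w' : ℕ → X}

theorem FixesCylinder.congr (h : FixesCylinder φ n w) (hw : Agree n w w') :
    FixesCylinder φ n w' := by
  obtain ⟨f, hf, hfix⟩ := h
  exact ⟨f, hf, fun u hu => hfix u (hu.trans hw.symm)⟩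

theorem fixesCylinder_of_not_commute {f g : FreeGroup ι} (hfg : ¬ Commute f g)
    (hu : ∀ u, Agree n u w → φ f (φ g u) = φ g (φ f u)) : FixesCylinder φ n w := by
  refine ⟨(g * f)⁻¹ * (f * g), fun h1 => hfg (inv_mul_eq_one.1 h1).symm, fun u huw => ?_⟩
  rw [map_mul, map_inv, Equiv.Perm.mul_apply, Equiv.Perm.inv_eq_iff_eq, map_mul, map_mul,
    Equiv.Perm.mul_apply, Equiv.Perm.mul_apply, hu u huw]

/-- Some positive power of a tree automorphism fixes a given vertex. -/
theorem IsTreeAut.exists_pow_agree [Finite X] {f : Equiv.Perm (ℕ → X)} (hf : IsTreeAut f) (n : ℕ)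
    (w : ℕ → X) : ∃ m ≠ 0, Agree n ((f ^ m) w) w := by
  have hpow : ∀ i u v, Agree n ((f ^ i) u) ((f ^ i) v) → Agree n u v := by
    intro i u v
    exact (IsTreeAut.agree_iff ((treeAut X).pow_mem hf i)).1
  obtain ⟨i, j, hij, hw⟩ := Finite.exists_ne_map_eq_of_infinite
    fun (i : ℕ) (k : Fin n) => (f ^ i) w k
  wlog hlt : i < j generalizing i j
  · exact this j i hij.symm hw.symm (by omega)
  refine ⟨j - i, by omega, hpow i _ _ fun k hk => ?_⟩
  rw [← Equiv.Perm.mul_apply, ← pow_add, Nat.add_sub_cancel' hlt.le]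
  exact (congrFun hw ⟨k, hk⟩).symm

/-- Two automorphisms, each fixing pointwise one of two sibling cylinders, commute on the union of
these cylinders. -/
theorem apply_comm_of_fixes_siblings {f g : Equiv.Perm (ℕ → Fin 2)} {w₀ w₁ : ℕ → Fin 2}
    (hf : IsTreeAut f) (hg : IsTreeAut g) (hw : Agree n w₀ w₁) (hne : w₀ n ≠ w₁ n)
    (hf₀ : ∀ u, Agree (n + 1) u w₀ → f u = u) (hg₁ : ∀ u, Agree (n + 1) u w₁ → g u = u)
    (u : ℕ → Fin 2) (hu : Agree n u w₀) : f (g u) = g (f u) := by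
  have maps : ∀ {g : Equiv.Perm (ℕ → Fin 2)} {w₀ w₁ u : ℕ → Fin 2}, IsTreeAut g →
      Agree n w₀ w₁ → w₀ n ≠ w₁ n → (∀ u, Agree (n + 1) u w₁ → g u = u) →
      Agree (n + 1) u w₀ → Agree (n + 1) (g u) w₀ := by
    intro g w₀ w₁ u hg hw hne hg₁ hu
    have hgw : g w₁ = w₁ := hg₁ w₁ (Agree.refl _ _)
    have h1 : Agree n (g u) w₁ := by
      rw [← hgw, hg.agree_iff]
      exact (Agree.succ_iff.1 hu).1.trans hw
    have h2 : g u n ≠ w₁ n := by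
      intro h2
      have h3 : Agree (n + 1) (g u) (g w₁) := by
        rw [hgw]
        exact Agree.succ_iff.2 ⟨h1, h2⟩
      have h4 := (Agree.succ_iff.1 (hg.agree_iff.1 h3)).2
      exact hne ((Agree.succ_iff.1 hu).2 ▸ h4)
    exact Agree.succ_iff.2 ⟨h1.trans hw.symm, by omega⟩
  by_cases hun : u n = w₀ n
  · have hu₀ : Agree (n + 1) u w₀ := Agree.succ_iff.2 ⟨hu, hun⟩
    rw [hf₀ u hu₀, hf₀ _ (maps hg hw hne hg₁ hu₀)]
  · have hu₁ : Agree (n + 1) u w₁ := Agree.succ_iff.2 ⟨hu.trans hw, by omega⟩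
    rw [hg₁ u hu₁, hg₁ _ (maps hf hw.symm hne.symm hf₀ hu₁)]

theorem FixesCylinder.of_siblings [Nontrivial ι] {φ : FreeGroup ι →* Equiv.Perm (ℕ → Fin 2)}
    (hφ : ∀ z, IsTreeAut (φ z)) {w₀ w₁ : ℕ → Fin 2} (hw : Agree n w₀ w₁) (hne : w₀ n ≠ w₁ n)
    (h₀ : FixesCylinder φ (n + 1) w₀) (h₁ : FixesCylinder φ (n + 1) w₁) :
    FixesCylinder φ n w₀ := by
  obtain ⟨g₀, hg₀, hfix₀⟩ := h₀
  obtain ⟨g₁, hg₁, hfix₁⟩ := h₁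
  have key : ∀ g, (∀ u, Agree (n + 1) u w₁ → φ g u = u) → ¬ Commute g₀ g → FixesCylinder φ n w₀ :=
    fun g hg hcomm => fixesCylinder_of_not_commute hcomm
      (apply_comm_of_fixes_siblings (hφ g₀) (hφ g) hw hne hfix₀ hg)
  by_cases hcomm : Commute g₀ g₁
  · obtain ⟨i, hi⟩ : ∃ i, ¬ Commute g₁ (FreeGroup.of i) := by
      by_contra! hall
      exact hg₁ (FreeGroup.eq_one_of_central g₁ hall)
    obtain ⟨m, hm, hagree⟩ := (hφ (FreeGroup.of i)).exists_pow_agree (n + 1) w₁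
    rw [← map_pow] at hagree
    refine key (FreeGroup.of i ^ m * g₁ * (FreeGroup.of i ^ m)⁻¹) (fun u hu => ?_) fun hcomm' => ?_
    · rw [map_mul, map_mul, map_inv, Equiv.Perm.mul_apply, Equiv.Perm.mul_apply, hfix₁,
        perm_apply_inv]
      rw [← (hφ (FreeGroup.of i ^ m)).agree_iff, perm_apply_inv]
      exact hu.trans hagree.symm
    · exact hi (FreeGroup.commute_of_commute_pow hm
        (FreeGroup.commute_of_commute_conj (FreeGroup.commute_trans hg₀ hcomm hcomm')))
  · exact key g₁ hfix₁ hcomm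

/-- If every point lies in a cylinder fixed by a nontrivial element, then so does the whole
space. -/
theorem FixesCylinder.zero [Nontrivial ι] {φ : FreeGroup ι →* Equiv.Perm (ℕ → Fin 2)}
    (hφ : ∀ z, IsTreeAut (φ z)) (hall : ∀ w, ∃ n, FixesCylinder φ n w) (w : ℕ → Fin 2) :
    FixesCylinder φ 0 w := by
  by_contra hw
  have step : ∀ n (w : {w : ℕ → Fin 2 // ¬ FixesCylinder φ n w}),
      ∃ w' : {w : ℕ → Fin 2 // ¬ FixesCylinder φ (n + 1) w}, Agree n w.1 w'.1 := by
    rintro n ⟨w, hw⟩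
    have hupd : ∀ x, Agree n w (Function.update w n x) := fun x i hi => by
      rw [Function.update_of_ne hi.ne]
    by_contra! hno
    have hfix : ∀ x, FixesCylinder φ (n + 1) (Function.update w n x) := fun x => by
      by_contra hx
      exact hno ⟨_, hx⟩ (hupd x)
    exact hw ((FixesCylinder.of_siblings hφ ((hupd 0).symm.trans (hupd 1)) (by simp)
      (hfix 0) (hfix 1)).congr (hupd 0).symm)
  choose next hnext using step
  let seq : ∀ n, {w : ℕ → Fin 2 // ¬ FixesCylinder φ n w} := fun n => Nat.rec ⟨w, hw⟩ next n
  have hseq : ∀ n, Agree n (seq n).1 (seq (n + 1)).1 := fun n => hnext n (seq n)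
  have hstable : ∀ m n, m ≤ n → Agree m (seq m).1 (seq n).1 := by
    intro m n hmn
    induction n, hmn using Nat.le_induction with
    | base => exact Agree.refl _ _
    | succ n hmn ih => exact ih.trans ((hseq n).mono hmn)
  obtain ⟨n, hn⟩ := hall fun i => (seq (i + 1)).1 i
  exact (seq n).2 (hn.congr fun i hi => hstable (i + 1) n hi i i.lt_succ_self)

end Cylinders

namespace TullioPair

variable {a b : Equiv.Perm (ℕ → Fin 2)} {φ : FreeGroup (Fin 2) →* Equiv.Perm (ℕ → Fin 2)}

theorem exists_inBall_positiveWord (hφ : ∀ z, φ z ∈ Subgroup.closure {a, b}) :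
    ∃ c : ℕ, ∀ (l : List (Fin 2)) (w : ℕ → Fin 2),
      InBall a b w (2 ^ c * l.length) (φ (positiveWord l) w) := by
  choose r hr using fun i => exists_inBall_of_mem_closure (hφ (FreeGroup.of i))
  have hc : ∀ i, r i ≤ 2 ^ (r 0 + r 1) := by
    have h2 := (Nat.lt_two_pow_self (n := r 0 + r 1)).le
    exact Fin.forall_fin_two.2 ⟨by omega, by omega⟩
  refine ⟨r 0 + r 1, fun l w => ?_⟩
  induction l with
  | nil =>
    have hnil : positiveWord ([] : List (Fin 2)) = 1 := rfl
    rw [hnil, map_one]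
    exact InBall.refl w _
  | cons i l ih =>
    rw [positiveWord_cons, map_mul, Equiv.Perm.mul_apply, List.length_cons, Nat.mul_succ]
    exact ih.trans ((hr i _).mono (hc i))

/-- Since the orbits grow subexponentially, all stabilizers in a free subgroup are noncommutative. -/
theorem exists_not_commute_fixing (h : TullioPair a b)
    (hφ : ∀ z, φ z ∈ Subgroup.closure {a, b}) (w : ℕ → Fin 2) :
    ∃ f g, φ f w = w ∧ φ g w = w ∧ ¬ Commute f g := by
  classical
  by_contra! hcomm
  obtain ⟨c, hc, hpow⟩ := FreeGroup.exists_zpow_eq_of_commute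
    (H := (MulAction.stabilizer (Equiv.Perm (ℕ → Fin 2)) w).comap φ)
    fun f hf g hg => hcomm f g hf hg
  obtain ⟨d, hd⟩ := exists_inBall_positiveWord hφ
  obtain ⟨r, hr⟩ : ∃ r, d + 8 ≤ r := ⟨_, le_rfl⟩
  obtain ⟨S, hS, hcard⟩ := h.exists_ball_cover_sq (2 ^ (d + r)) w
  have hlt := ball_bound_lt_two_pow d r hr
  have hrad : 2 ^ d * 2 ^ (d + 2 * r) = 2 ^ (d + r) * 2 ^ (d + r) := by ring
  generalize 2 ^ (d + 2 * r) = n at hlt hrad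
  have hle := Finset.card_le_mul_card_image_of_maps_to (s := Finset.univ) (t := S)
    (f := fun l : Fin n → Fin 2 => φ (positiveWord (List.ofFn l)) w)
    (fun l _ => hS _ (by simpa [← hrad] using hd (List.ofFn l) w)) (4 * n + 1) fun y _ =>
      card_le_of_mul_mem_zpowers hc _ fun l hl l' hl' => hpow _ (by
        simp only [Finset.mem_filter, Finset.mem_univ, true_and] at hl hl'
        rw [Subgroup.mem_comap, MulAction.mem_stabilizer_iff, Equiv.Perm.smul_def, map_mul,
          map_inv, Equiv.Perm.mul_apply, hl', Equiv.Perm.inv_eq_iff_eq, hl])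
  rw [Finset.card_univ, Fintype.card_fun, Fintype.card_fin, Fintype.card_fin] at hle
  exact absurd (hle.trans (Nat.mul_le_mul_left _ hcard)) hlt.not_ge

theorem not_injective (h : TullioPair a b) (hφ : ∀ z, φ z ∈ Subgroup.closure {a, b}) :
    ¬ Function.Injective φ := by
  intro hinj
  have hall : ∀ w, ∃ n, FixesCylinder φ n w := by
    intro w
    obtain ⟨f, g, hf, hg, hfg⟩ := h.exists_not_commute_fixing hφ w
    obtain ⟨n, hn⟩ := h.germEq_mul_comm (hφ f) (hφ g) hf hg
    exact ⟨n, fixesCylinder_of_not_commute hfg hn⟩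
  obtain ⟨f, hf, hfix⟩ :=
    FixesCylinder.zero (fun z => h.isTreeAut_of_mem (hφ z)) hall fun _ => 0
  refine hf (hinj ?_)
  rw [map_one]
  exact Equiv.ext fun u => hfix u (Agree.zero u _)

end TullioPair

/-- **Example `ex:tullio`.** Let `a` and `b` be the automorphisms of the
binary rooted tree `{0,1}^*` defined recursively by `a(0v) = 1v`, `a(1v) = 0·a(v)`,
`b(0v) = 0·b(v)`, `b(1v) = 1·a(v)`. Then `a ∈ P_0({0,1})`, `b ∈ P_1({0,1})`, and the
group `G = ⟨a, b⟩` contains no free non-abelian subgroup. -/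
theorem stmt_15 (a b : Equiv.Perm (ℕ → Fin 2))
    (ha0 : ∀ v : ℕ → Fin 2, a (scons 0 v) = scons 1 v)
    (ha1 : ∀ v : ℕ → Fin 2, a (scons 1 v) = scons 0 (a v))
    (hb0 : ∀ v : ℕ → Fin 2, b (scons 0 v) = scons 0 (b v))
    (hb1 : ∀ v : ℕ → Fin 2, b (scons 1 v) = scons 1 (a v)) :
    MemP 0 a ∧ MemP 1 b ∧
      ∀ φ : FreeGroup (Fin 2) →* Equiv.Perm (ℕ → Fin 2),
        (∀ z, φ z ∈ Subgroup.closure {a, b}) → ¬ Function.Injective φ := by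
  have h : TullioPair a b := ⟨ha0, ha1, hb0, hb1⟩
  exact ⟨h.memP_a, h.memP_b, fun _ hφ => h.not_injective hφ⟩
end
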